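/- Let T be a tensorly faithful Wakamatsu tilting (S,R)-bimodule and N a right S-module of finite Gorenstein flat dimension. If either the projective dimension of T as a left S-module is finite, or the injective dimension of T as a left S-module is finite, then N belongs to the Auslander class 𝒜_T(S). -/

import Mathlib

open Function MulOpposite

universe u

noncomputable section

/-! ## Chain conditions -/

/-- A ring is right coherent if every finitely generated right ideal is finitely presented. -/
def IsRightCoherentRing (R : Type u) [Ring R] : Prop :=
  ∀ I : Submodule Rᵐᵒᵖ R, I.FG → Module.FinitePresentation Rᵐᵒᵖ I

/-- A ring is left coherent if every finitely generated left ideal is finitely presented. -/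
def IsLeftCoherentRing (S : Type u) [Ring S] : Prop :=
  ∀ I : Submodule S S, I.FG → Module.FinitePresentation S I

/-- A ring is right Noetherian if every right ideal is finitely generated. -/
def IsRightNoetherianRing (R : Type u) [Ring R] : Prop :=
  ∀ I : Submodule Rᵐᵒᵖ R, I.FG

/-! ## The tensor product `N ⊗_S T` of a right `S`-module `N` with a left `S`-module `T` -/

section MTensor

variable (S : Type u) [Ring S]
variable (N : Type u) [AddCommGroup N] [Module Sᵐᵒᵖ N]
variable (T : Type u) [AddCommGroup T] [Module S T]

/-- The subgroup of balancing relations defining `N ⊗_S T` as a quotient of `T ⊗_ℤ N`. -/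
def mtRel : AddSubgroup (TensorProduct ℤ T N) :=
  AddSubgroup.closure
    {x | ∃ (s : S) (t : T) (n : N), x = (s • t) ⊗ₜ[ℤ] n - t ⊗ₜ[ℤ] (op s • n)}

/-- `MTensor S N T` is the tensor product `N ⊗_S T` of a right `S`-module `N` with a left
`S`-module `T`, realized as a quotient of `T ⊗_ℤ N`. -/
def MTensor : Type u := TensorProduct ℤ T N ⧸ mtRel S N T

instance : AddCommGroup (MTensor S N T) :=
  inferInstanceAs (AddCommGroup (TensorProduct ℤ T N ⧸ mtRel S N T))

variable {S N T}

/-- `MTensor.mk n t` is the element `n ⊗ t` of `N ⊗_S T`. -/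
def MTensor.mk (n : N) (t : T) : MTensor S N T := QuotientAddGroup.mk (t ⊗ₜ[ℤ] n)

section Map

variable {N' : Type u} [AddCommGroup N'] [Module Sᵐᵒᵖ N']

/-- Functoriality of `N ⊗_S T` in the right `S`-module variable `N`. -/
def MTensor.map (g : N →ₗ[Sᵐᵒᵖ] N') : MTensor S N T →+ MTensor S N' T :=
  QuotientAddGroup.map _ _
    (LinearMap.lTensor T g.toAddMonoidHom.toIntLinearMap).toAddMonoidHom
    (by
      refine (AddSubgroup.closure_le _).2 ?_
      rintro x ⟨s, t, n, rfl⟩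
      simp only [SetLike.mem_coe, AddSubgroup.mem_comap, LinearMap.toAddMonoidHom_coe,
        map_sub, LinearMap.lTensor_tmul, AddMonoidHom.coe_toIntLinearMap,
        LinearMap.toAddMonoidHom_coe, map_smul]
      exact AddSubgroup.subset_closure ⟨s, t, g n, rfl⟩)

end Map

section LMap

variable {T' : Type u} [AddCommGroup T'] [Module S T']

/-- Functoriality of `N ⊗_S T` in the left `S`-module variable `T`. -/
def MTensor.lmap (h : T →ₗ[S] T') : MTensor S N T →+ MTensor S N T' :=
  QuotientAddGroup.map _ _
    (LinearMap.rTensor N h.toAddMonoidHom.toIntLinearMap).toAddMonoidHom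
    (by
      refine (AddSubgroup.closure_le _).2 ?_
      rintro x ⟨s, t, n, rfl⟩
      simp only [SetLike.mem_coe, AddSubgroup.mem_comap, LinearMap.toAddMonoidHom_coe,
        map_sub, LinearMap.rTensor_tmul, AddMonoidHom.coe_toIntLinearMap, map_smul]
      exact AddSubgroup.subset_closure ⟨s, h t, n, rfl⟩)

end LMap

section Bimod

variable (R : Type u) [Ring R] [Module Rᵐᵒᵖ T] [SMulCommClass S Rᵐᵒᵖ T]

instance MTensor.instSMul : SMul Rᵐᵒᵖ (MTensor S N T) :=
  ⟨fun ρ =>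
    QuotientAddGroup.map _ _ (DistribMulAction.toAddMonoidHom (TensorProduct ℤ T N) ρ)
      (by
        refine (AddSubgroup.closure_le _).2 ?_
        rintro x ⟨s, t, n, rfl⟩
        simp only [SetLike.mem_coe, AddSubgroup.mem_comap,
          DistribMulAction.toAddMonoidHom_apply, smul_sub, TensorProduct.smul_tmul']
        exact AddSubgroup.subset_closure ⟨s, ρ • t, n, by rw [smul_comm s ρ t]⟩)⟩

instance MTensor.instModule : Module Rᵐᵒᵖ (MTensor S N T) :=
  Function.Surjective.module Rᵐᵒᵖ (QuotientAddGroup.mk' (mtRel S N T))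
    (QuotientAddGroup.mk'_surjective _) (fun _ _ => rfl)

theorem MTensor.smul_mk (ρ : Rᵐᵒᵖ) (n : N) (t : T) :
    ρ • (MTensor.mk n t : MTensor S N T) = MTensor.mk n (ρ • t) := by
  show QuotientAddGroup.mk (ρ • (t ⊗ₜ[ℤ] n)) = QuotientAddGroup.mk ((ρ • t) ⊗ₜ[ℤ] n)
  rw [TensorProduct.smul_tmul']

theorem MTensor.mk_add_right (n : N) (t t' : T) :
    (MTensor.mk n (t + t') : MTensor S N T) = MTensor.mk n t + MTensor.mk n t' := by
  show QuotientAddGroup.mk _ = _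
  rw [TensorProduct.add_tmul]
  rfl

/-- The natural map `θ_N : N → Hom_R(T, N ⊗_S T)`, `n ↦ (t ↦ n ⊗ t)`. -/
def MTensor.theta (n : N) : T →ₗ[Rᵐᵒᵖ] MTensor S N T where
  toFun t := MTensor.mk n t
  map_add' t t' := MTensor.mk_add_right n t t'
  map_smul' ρ t := (MTensor.smul_mk R ρ n t).symm

variable (S T N) in
/-- The natural map `θ_N : N → Hom_R(T, N ⊗_S T)` as a function. -/
def MTensor.thetaFun : N → (T →ₗ[Rᵐᵒᵖ] MTensor S N T) := fun n => MTensor.theta R n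

end Bimod

end MTensor

/-! ## The right `S`-module structure on `Hom_A(T, M)` induced by a left `S`-action on `T` -/

section HomModule

variable {B A : Type u} [Ring B] [Ring A]
variable {T : Type u} [AddCommGroup T] [Module A T] [Module B T] [SMulCommClass B A T]
variable {M : Type u} [AddCommGroup M] [Module A M]

instance homDomSMul : SMul Bᵐᵒᵖ (T →ₗ[A] M) :=
  ⟨fun b f =>
    { toFun := fun t => f (b.unop • t)
      map_add' := fun t t' => by
        show f (b.unop • (t + t')) = f (b.unop • t) + f (b.unop • t')
        rw [smul_add, map_add]
      map_smul' := fun a t => by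
        show f (b.unop • a • t) = a • f (b.unop • t)
        rw [smul_comm b.unop a t, map_smul] }⟩

@[simp] theorem homDomSMul_apply (b : Bᵐᵒᵖ) (f : T →ₗ[A] M) (t : T) :
    (b • f) t = f (b.unop • t) := rfl

instance homDomModule : Module Bᵐᵒᵖ (T →ₗ[A] M) where
  one_smul f := LinearMap.ext fun t => by simp
  mul_smul b b' f := LinearMap.ext fun t => by simp [mul_smul]
  smul_zero b := LinearMap.ext fun t => rfl
  smul_add b f g := LinearMap.ext fun t => rfl
  add_smul b b' f := LinearMap.ext fun t => by simp [add_smul]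
  zero_smul f := LinearMap.ext fun t => by simp

end HomModule

/-! ## The evaluation map `ν_M : Hom_R(T, M) ⊗_S T → M` -/

section Nu

variable (S R : Type u) [Ring S] [Ring R]
variable (T : Type u) [AddCommGroup T] [Module S T] [Module Rᵐᵒᵖ T] [SMulCommClass S Rᵐᵒᵖ T]
variable (M : Type u) [AddCommGroup M] [Module Rᵐᵒᵖ M]

/-- The evaluation map `ν_M : Hom_R(T, M) ⊗_S T → M`, `f ⊗ t ↦ f t`. -/
def MTensor.nuFun : MTensor S (T →ₗ[Rᵐᵒᵖ] M) T →+ M :=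
  QuotientAddGroup.lift _
    (TensorProduct.liftAddHom
      { toFun := fun t =>
          { toFun := fun f : T →ₗ[Rᵐᵒᵖ] M => f t
            map_zero' := rfl
            map_add' := fun f g => rfl }
        map_zero' := AddMonoidHom.ext fun f => f.map_zero
        map_add' := fun t t' => AddMonoidHom.ext fun f => f.map_add t t' }
      (fun z t f => by
        show f (z • t) = (z • f) t
        rw [map_zsmul, LinearMap.smul_apply]))
    (by
      refine (AddSubgroup.closure_le _).2 ?_
      rintro x ⟨s, t, f, rfl⟩
      simp only [SetLike.mem_coe, AddMonoidHom.mem_ker, map_sub,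
        TensorProduct.liftAddHom_tmul, AddMonoidHom.coe_mk, ZeroHom.coe_mk]
      show f (s • t) - (op s • f) t = 0
      rw [homDomSMul_apply]
      simp)

end Nu


/-! ## Resolutions and derived-functor vanishing -/

/-- The data of a nonnegatively graded chain complex `⋯ → P 1 → P 0 → X` of `A`-modules. -/
structure ResolutionData (A : Type u) [Ring A] (X : Type u) [AddCommGroup X] [Module A X] :
    Type (u + 1) where
  P : ℕ → Type u
  [instAdd : ∀ n, AddCommGroup (P n)]
  [instMod : ∀ n, Module A (P n)]
  d : ∀ n, P (n + 1) →ₗ[A] P n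
  ε : P 0 →ₗ[A] X

attribute [instance] ResolutionData.instAdd ResolutionData.instMod

/-- The property of being a projective resolution. -/
structure ResolutionData.IsProjResolution {A : Type u} [Ring A] {X : Type u} [AddCommGroup X]
    [Module A X] (Q : ResolutionData A X) : Prop where
  proj : ∀ n, Module.Projective A (Q.P n)
  surj : Function.Surjective Q.ε
  exact0 : Function.Exact (Q.d 0) Q.ε
  exactSucc : ∀ n, Function.Exact (Q.d (n + 1)) (Q.d n)

/-- `X` has a resolution by finitely generated projective `A`-modules. -/
def HasFGProjResolution (A : Type u) [Ring A] (X : Type u) [AddCommGroup X] [Module A X] : Prop :=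
  ∃ Q : ResolutionData A X, Q.IsProjResolution ∧ ∀ n, Module.Finite A (Q.P n)

/-- `Ext^i_A(X, Y) = 0` for all `i ≥ 1`: some (equivalently, any) projective resolution of `X`
has `Hom_A(-, Y)`-complex exact at all positive degrees. -/
def ExtVanishAll (A : Type u) [Ring A] (X Y : Type u) [AddCommGroup X] [Module A X]
    [AddCommGroup Y] [Module A Y] : Prop :=
  ∃ Q : ResolutionData A X, Q.IsProjResolution ∧
    ∀ j : ℕ, Function.Exact
      (fun f : Q.P j →ₗ[A] Y => f.comp (Q.d j))
      (fun f : Q.P (j + 1) →ₗ[A] Y => f.comp (Q.d (j + 1)))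

/-- `Ext^1_A(X, Y) = 0`: every short exact sequence `0 → Y → E → X → 0` splits. -/
def Ext1Vanishes (A : Type u) [Ring A] (X Y : Type u) [AddCommGroup X] [Module A X]
    [AddCommGroup Y] [Module A Y] : Prop :=
  ∀ (E : Type u) [AddCommGroup E] [Module A E] (i : Y →ₗ[A] E) (p : E →ₗ[A] X),
    Function.Injective i → Function.Surjective p → Function.Exact i p →
      ∃ s : X →ₗ[A] E, p.comp s = LinearMap.id

/-- `Tor^S_i(N, T) = 0` for all `i ≥ 1`: some (equivalently, any) projective resolution of the
right `S`-module `N` stays exact in positive degrees after applying `- ⊗_S T`. -/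
def TorVanishAll (S : Type u) [Ring S] (N : Type u) [AddCommGroup N] [Module Sᵐᵒᵖ N]
    (T : Type u) [AddCommGroup T] [Module S T] : Prop :=
  ∃ Q : ResolutionData Sᵐᵒᵖ N, Q.IsProjResolution ∧
    ∀ j : ℕ, Function.Exact
      (⇑(MTensor.map (T := T) (Q.d (j + 1))))
      (⇑(MTensor.map (T := T) (Q.d j)))

/-! ## Homological dimensions -/

/-- A surjection onto `M` from some module. -/
structure EpiOnto (A : Type u) [Ring A] (M : ModuleCat.{u} A) : Type (u + 1) where
  P : ModuleCat.{u} A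
  f : P →ₗ[A] M
  surj : Function.Surjective f

/-- An injection of `M` into some module. -/
structure MonoInto (A : Type u) [Ring A] (M : ModuleCat.{u} A) : Type (u + 1) where
  E : ModuleCat.{u} A
  f : M →ₗ[A] E
  inj : Function.Injective f

/-- `HasClassResolution A 𝒞 n M` says that there is an exact sequence
`0 → C_n → ⋯ → C_0 → M → 0` with all `C_i` in the class `𝒞`. -/
def HasClassResolution (A : Type u) [Ring A] (C : ModuleCat.{u} A → Prop) :
    ℕ → ModuleCat.{u} A → Prop
  | 0, M => C M
  | n + 1, M => ∃ e : EpiOnto A M, C e.P ∧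
      HasClassResolution A C n (ModuleCat.of A (LinearMap.ker e.f))

/-- `HasClassCoresolution A 𝒞 n M` says that there is an exact sequence
`0 → M → C^0 → ⋯ → C^n → 0` with all `C^i` in the class `𝒞`. -/
def HasClassCoresolution (A : Type u) [Ring A] (C : ModuleCat.{u} A → Prop) :
    ℕ → ModuleCat.{u} A → Prop
  | 0, M => C M
  | n + 1, M => ∃ m : MonoInto A M, C m.E ∧
      HasClassCoresolution A C n (ModuleCat.of A ((↥m.E) ⧸ LinearMap.range m.f))

/-- The projective dimension of `M` is at most `n`. -/
def ProjDimLE (A : Type u) [Ring A] (M : Type u) [AddCommGroup M] [Module A M] (n : ℕ) : Prop :=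
  HasClassResolution A (fun P => Module.Projective A P) n (ModuleCat.of A M)

/-- The injective dimension of `M` is at most `n`. -/
def InjDimLE (A : Type u) [Ring A] (M : Type u) [AddCommGroup M] [Module A M] (n : ℕ) : Prop :=
  HasClassCoresolution A (fun E => Module.Injective A E) n (ModuleCat.of A M)

/-- A right `S`-module `N` is flat if `N ⊗_S -` preserves injections of left `S`-modules. -/
def IsFlatRightModule (S : Type u) [Ring S] (N : Type u) [AddCommGroup N] [Module Sᵐᵒᵖ N] :
    Prop :=
  ∀ (X Y : Type u) [AddCommGroup X] [Module S X] [AddCommGroup Y] [Module S Y]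
    (g : X →ₗ[S] Y), Function.Injective g →
      Function.Injective (MTensor.lmap (N := N) g)

/-- The flat dimension of the right `S`-module `N` is at most `n`. -/
def FlatDimLE (S : Type u) [Ring S] (N : Type u) [AddCommGroup N] [Module Sᵐᵒᵖ N] (n : ℕ) :
    Prop :=
  HasClassResolution Sᵐᵒᵖ (fun P => IsFlatRightModule S P) n (ModuleCat.of Sᵐᵒᵖ N)

/-! ## Gorenstein homological algebra -/

/-- The data of a `ℤ`-indexed complex of `A`-modules. -/
structure ZComplex (A : Type u) [Ring A] : Type (u + 1) where
  P : ℤ → Type u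
  [instAdd : ∀ i, AddCommGroup (P i)]
  [instMod : ∀ i, Module A (P i)]
  d : ∀ i, P i →ₗ[A] P (i + 1)

attribute [instance] ZComplex.instAdd ZComplex.instMod

/-- Exactness of a `ℤ`-indexed complex. -/
def ZComplex.IsExact {A : Type u} [Ring A] (C : ZComplex A) : Prop :=
  ∀ i, Function.Exact (C.d i) (C.d (i + 1))

/-- A module is Gorenstein projective if it is a kernel of a totally acyclic complex of
projective modules. -/
def IsGorensteinProjective (A : Type u) [Ring A] (N : Type u) [AddCommGroup N] [Module A N] :
    Prop :=
  ∃ C : ZComplex A, (∀ i, Module.Projective A (C.P i)) ∧ C.IsExact ∧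
    (∀ (Q : Type u) [AddCommGroup Q] [Module A Q], Module.Projective A Q →
      ∀ i, Function.Exact
        (fun f : C.P (i + 1 + 1) →ₗ[A] Q => f.comp (C.d (i + 1)))
        (fun f : C.P (i + 1) →ₗ[A] Q => f.comp (C.d i))) ∧
    Nonempty (N ≃ₗ[A] LinearMap.ker (C.d 0))

/-- A module is Gorenstein injective if it is a kernel of a totally acyclic complex of
injective modules. -/
def IsGorensteinInjective (A : Type u) [Ring A] (M : Type u) [AddCommGroup M] [Module A M] :
    Prop :=
  ∃ C : ZComplex A, (∀ i, Module.Injective A (C.P i)) ∧ C.IsExact ∧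
    (∀ (I : Type u) [AddCommGroup I] [Module A I], Module.Injective A I →
      ∀ i, Function.Exact
        (fun f : I →ₗ[A] C.P i => (C.d i).comp f)
        (fun f : I →ₗ[A] C.P (i + 1) => (C.d (i + 1)).comp f)) ∧
    Nonempty (M ≃ₗ[A] LinearMap.ker (C.d 0))

/-- A right `S`-module is Gorenstein flat if it is a kernel of a complex of flat right
`S`-modules which stays exact after tensoring with any injective left `S`-module. -/
def IsGorensteinFlat (S : Type u) [Ring S] (N : Type u) [AddCommGroup N] [Module Sᵐᵒᵖ N] :
    Prop :=
  ∃ C : ZComplex Sᵐᵒᵖ, (∀ i, IsFlatRightModule S (C.P i)) ∧ C.IsExact ∧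
    (∀ (I : Type u) [AddCommGroup I] [Module S I], Module.Injective S I →
      ∀ i, Function.Exact
        (⇑(MTensor.map (T := I) (C.d i)))
        (⇑(MTensor.map (T := I) (C.d (i + 1))))) ∧
    Nonempty (N ≃ₗ[Sᵐᵒᵖ] LinearMap.ker (C.d 0))

/-- The Gorenstein projective dimension of `N` is at most `n`. -/
def GpdLE (A : Type u) [Ring A] (N : Type u) [AddCommGroup N] [Module A N] (n : ℕ) : Prop :=
  HasClassResolution A (fun P => IsGorensteinProjective A P) n (ModuleCat.of A N)

/-- The Gorenstein flat dimension of the right `S`-module `N` is at most `n`. -/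
def GfdLE (S : Type u) [Ring S] (N : Type u) [AddCommGroup N] [Module Sᵐᵒᵖ N] (n : ℕ) : Prop :=
  HasClassResolution Sᵐᵒᵖ (fun P => IsGorensteinFlat S P) n (ModuleCat.of Sᵐᵒᵖ N)

/-- The Gorenstein injective dimension of `M` is at most `n`. -/
def GidLE (A : Type u) [Ring A] (M : Type u) [AddCommGroup M] [Module A M] (n : ℕ) : Prop :=
  HasClassCoresolution A (fun E => IsGorensteinInjective A E) n (ModuleCat.of A M)

/-! ## Module classes `Prod(C)`, `Add(C)`, `add(C)` and (co)generators -/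

/-- `M` is a retract (equivalently, a direct summand up to isomorphism) of `P`. -/
def IsRetractOf (A : Type u) [Ring A] (M P : Type u) [AddCommGroup M] [Module A M]
    [AddCommGroup P] [Module A P] : Prop :=
  ∃ (f : M →ₗ[A] P) (g : P →ₗ[A] M), g.comp f = LinearMap.id

/-- `Prod(C)`: direct summands of direct products of copies of `C`. -/
def InProdClass (A : Type u) [Ring A] (C : Type u) [AddCommGroup C] [Module A C]
    (M : ModuleCat.{u} A) : Prop :=
  ∃ I : Type u, IsRetractOf A M (I → C)

/-- `Add(C)`: direct summands of direct sums of copies of `C`. -/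
def InAddClass (A : Type u) [Ring A] (C : Type u) [AddCommGroup C] [Module A C]
    (M : ModuleCat.{u} A) : Prop :=
  ∃ I : Type u, IsRetractOf A M (I →₀ C)

/-- `add(C)`: direct summands of finite direct sums of copies of `C`. -/
def InFinAddClass (A : Type u) [Ring A] (C : Type u) [AddCommGroup C] [Module A C]
    (M : ModuleCat.{u} A) : Prop :=
  ∃ k : ℕ, IsRetractOf A M (Fin k → C)

/-- `Q` is an injective cogenerator: `Q` is injective and every module embeds into a direct
product of copies of `Q`. -/
def IsInjectiveCogenerator (A : Type u) [Ring A] (Q : Type u) [AddCommGroup Q] [Module A Q] :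
    Prop :=
  Module.Injective A Q ∧
    ∀ (M : Type u) [AddCommGroup M] [Module A M],
      ∃ (I : Type u) (f : M →ₗ[A] (I → Q)), Function.Injective f

/-- `E` is the minimal injective cogenerator: it is an injective cogenerator which is a direct
summand of every injective cogenerator. -/
def IsMinimalInjectiveCogenerator (A : Type u) [Ring A] (E : Type u) [AddCommGroup E]
    [Module A E] : Prop :=
  IsInjectiveCogenerator A E ∧
    ∀ (Q : Type u) [AddCommGroup Q] [Module A Q],
      IsInjectiveCogenerator A Q → IsRetractOf A E Q

/-! ## Bimodules, homotheties, Wakamatsu tilting bimodules -/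

section Bimodules

variable (S R : Type u) [Ring S] [Ring R]
variable (T : Type u) [AddCommGroup T] [Module S T] [Module Rᵐᵒᵖ T] [SMulCommClass S Rᵐᵒᵖ T]

/-- The natural map `S → End(T_R)` given by the left `S`-action. -/
def leftHomothety : S → (T →ₗ[Rᵐᵒᵖ] T) := fun s =>
  { toFun := fun t => s • t
    map_add' := fun t t' => smul_add s t t'
    map_smul' := fun ρ t => smul_comm s ρ t }

/-- The natural map `R → End(_S T)` given by the right `R`-action. -/
def rightHomothety : R → (T →ₗ[S] T) := fun r =>
  { toFun := fun t => op r • t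
    map_add' := fun t t' => smul_add (op r) t t'
    map_smul' := fun s t => (smul_comm s (op r) t).symm }

/-- A Wakamatsu tilting `(S, R)`-bimodule: `T` admits resolutions by finitely generated
projectives on both sides, the natural maps `S → End(T_R)` and `R → End(_S T)` are
isomorphisms, and `Ext^i(T, T) = 0` on both sides for all `i ≥ 1`. -/
structure IsWakamatsuTilting : Prop where
  fgProjResR : HasFGProjResolution Rᵐᵒᵖ T
  fgProjResS : HasFGProjResolution S T
  bijS : Function.Bijective (leftHomothety S R T)
  bijR : Function.Bijective (rightHomothety S R T)
  extR : ExtVanishAll Rᵐᵒᵖ T T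
  extS : ExtVanishAll S T T

/-- An `(S, R)`-bimodule `T` is tensorly faithful if `T ⊗_R M = 0` implies `M = 0` and
`N ⊗_S T = 0` implies `N = 0`. -/
def IsTensorlyFaithful : Prop :=
  (∀ (M : Type u) [AddCommGroup M] [Module R M],
      Subsingleton (MTensor R T M) → Subsingleton M) ∧
  (∀ (N : Type u) [AddCommGroup N] [Module Sᵐᵒᵖ N],
      Subsingleton (MTensor S N T) → Subsingleton N)

/-- Membership in the Auslander class `𝒜_T(S)`. -/
structure InAuslanderClass (N : Type u) [AddCommGroup N] [Module Sᵐᵒᵖ N] : Prop where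
  torVanish : TorVanishAll S N T
  extVanish : ExtVanishAll Rᵐᵒᵖ T (MTensor S N T)
  thetaBij : Function.Bijective (MTensor.thetaFun S N T R)

/-- Membership in the Bass class `ℬ_T(R)`. -/
structure InBassClass (M : Type u) [AddCommGroup M] [Module Rᵐᵒᵖ M] : Prop where
  extVanish : ExtVanishAll Rᵐᵒᵖ T M
  torVanish : TorVanishAll S (T →ₗ[Rᵐᵒᵖ] M) T
  nuBij : Function.Bijective (MTensor.nuFun S R T M)

end Bimodules

/-! ## Cotilting and tilting modules -/

/-- A cotilting right `R`-module (Hügel–Coelho): finite injective dimension,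
`Ext^{i≥1}_R(Cᴵ, C) = 0` for every index set `I`, and there is a finite exact sequence
`0 → C_r → ⋯ → C_0 → Q → 0` with all `C_i ∈ Prod(C)` and `Q` an injective cogenerator. -/
structure IsCotilting (R : Type u) [Ring R] (C : Type u) [AddCommGroup C] [Module Rᵐᵒᵖ C] :
    Prop where
  finInjDim : ∃ n, InjDimLE Rᵐᵒᵖ C n
  extProdVanish : ∀ I : Type u, ExtVanishAll Rᵐᵒᵖ (I → C) C
  coresolution : ∃ (Q : ModuleCat.{u} Rᵐᵒᵖ) (r : ℕ),
    IsInjectiveCogenerator Rᵐᵒᵖ Q ∧ HasClassResolution Rᵐᵒᵖ (InProdClass Rᵐᵒᵖ C) r Q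

/-- An `n`-tilting right `R`-module (Miyashita). -/
structure IsNTilting (R : Type u) [Ring R] (T : Type u) [AddCommGroup T] [Module Rᵐᵒᵖ T]
    (n : ℕ) : Prop where
  fgProjRes : HasFGProjResolution Rᵐᵒᵖ T
  projDim : ProjDimLE Rᵐᵒᵖ T n
  extVanish : ExtVanishAll Rᵐᵒᵖ T T
  coresolution : HasClassCoresolution Rᵐᵒᵖ (InFinAddClass Rᵐᵒᵖ T) n (ModuleCat.of Rᵐᵒᵖ R)

/-- The data of a coresolution `0 → R → P 0 → P 1 → ⋯` of right `R`-modules. -/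
structure WakamatsuCoresolutionData (R : Type u) [Ring R] : Type (u + 1) where
  P : ℕ → Type u
  [instAdd : ∀ n, AddCommGroup (P n)]
  [instMod : ∀ n, Module Rᵐᵒᵖ (P n)]
  f0 : R →ₗ[Rᵐᵒᵖ] P 0
  d : ∀ n, P n →ₗ[Rᵐᵒᵖ] P (n + 1)

attribute [instance] WakamatsuCoresolutionData.instAdd WakamatsuCoresolutionData.instMod

/-- A Wakamatsu tilting right `R`-module: it admits a resolution by finitely generated
projective right `R`-modules, `Ext^{i≥1}_R(T, T) = 0`, and there is an exact sequence
`0 → R → T^0 → T^1 → ⋯` with each `T^i ∈ add(T)` and `Ext^1_R(Coker f, T) = 0` for every map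
`f` in this sequence. -/
def IsWakamatsuTiltingModule (R : Type u) [Ring R] (T : Type u) [AddCommGroup T]
    [Module Rᵐᵒᵖ T] : Prop :=
  HasFGProjResolution Rᵐᵒᵖ T ∧ ExtVanishAll Rᵐᵒᵖ T T ∧
    ∃ W : WakamatsuCoresolutionData R,
      Function.Injective W.f0 ∧ Function.Exact W.f0 (W.d 0) ∧
      (∀ n, Function.Exact (W.d n) (W.d (n + 1))) ∧
      (∀ n, InFinAddClass Rᵐᵒᵖ T (ModuleCat.of Rᵐᵒᵖ (W.P n))) ∧
      Ext1Vanishes Rᵐᵒᵖ ((W.P 0) ⧸ LinearMap.range W.f0) T ∧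
      (∀ n, Ext1Vanishes Rᵐᵒᵖ ((W.P (n + 1)) ⧸ LinearMap.range (W.d n)) T)

/-!
Write `X⁺` for the character module of `X`. Since `(N ⊗_S T)⁺ = Hom_S(N, T⁺)`, the vanishing of
`Tor^S_i(N, T)` is the vanishing of `Ext^i_S(N, T⁺)`, so dimension shifting for both functors takes
place in long exact `Ext` sequences.

Flat modules `F` lie in `𝒜_T(S)`, because `F ⊗_S Hom_R(M, T) → Hom_R(M, F ⊗_S T)` is bijective
for finitely presented `M`. Let `C` be an exact complex of flat modules which stays exact after
tensoring with injective modules, and let `Z` run through its cycles. Then `Ext^i(Z, T⁺)` vanishes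
for injective `T` by assumption and for flat `T` because `T⁺` is injective; shifting along the
characters of a finite flat resolution or injective coresolution of `T` gives `Tor_i(Z, T) = 0`.
The sequences `0 → Z^i → C^i → Z^{i+1} → 0` therefore remain exact after tensoring with `T`, and
comparing them with their images under `Hom_R(T, - ⊗_S T)` puts all cycles in `𝒜_T(S)`.

Finally, the cokernel of an injection `f : K → G` between modules of `𝒜_T(S)` is again in
`𝒜_T(S)`: for the kernel `X` of `f ⊗ T`, bijectivity of `θ_K` and `θ_G` gives `Hom_R(T, X) = 0`,
hence `T ⊗_R X⁺ = Hom_R(T, X)⁺ = 0`, and `X = 0` by tensor faithfulness. This settles modules of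
finite Gorenstein flat dimension by induction.
-/

/-! ### Short exact sequences and `Ext` -/

open CategoryTheory.Abelian in
/-- The vanishing of the single group `Ext^n_A(X, Y)`. -/
def ExtVanish (A : Type u) [Ring A] (n : ℕ) (X Y : Type u) [AddCommGroup X] [Module A X]
    [AddCommGroup Y] [Module A Y] : Prop :=
  Subsingleton (Ext (ModuleCat.of A X) (ModuleCat.of A Y) n)

/-- A short exact sequence `0 → X' → X → X'' → 0` of modules. -/
structure IsShortExact {A : Type u} [Ring A] {X' X X'' : Type u} [AddCommGroup X'] [Module A X']
    [AddCommGroup X] [Module A X] [AddCommGroup X''] [Module A X'']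
    (f : X' →ₗ[A] X) (g : X →ₗ[A] X'') : Prop where
  inj : Injective f
  exact : Exact f g
  surj : Surjective g

namespace IsShortExact

open CategoryTheory CategoryTheory.Abelian

variable {A : Type u} [Ring A] {X' X X'' Y : Type u} [AddCommGroup X'] [Module A X']
  [AddCommGroup X] [Module A X] [AddCommGroup X''] [Module A X''] [AddCommGroup Y] [Module A Y]
  {f : X' →ₗ[A] X} {g : X →ₗ[A] X''}

theorem subtype_ker {g : X →ₗ[A] X''} (hg : Surjective g) :
    IsShortExact (LinearMap.ker g).subtype g :=
  ⟨Subtype.val_injective, LinearMap.exact_subtype_ker_map g, hg⟩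

theorem mkQ_range {f : X' →ₗ[A] X} (hf : Injective f) :
    IsShortExact f (LinearMap.range f).mkQ :=
  ⟨hf, LinearMap.exact_map_mkQ_range f, Submodule.mkQ_surjective _⟩

/-- The categorical form of a short exact sequence of modules. -/
abbrev shortComplex (h : IsShortExact f g) : ShortComplex (ModuleCat.{u} A) :=
  .mk (ModuleCat.ofHom f) (ModuleCat.ofHom g) (ModuleCat.hom_ext h.exact.linearMap_comp_eq_zero)

theorem shortExact (h : IsShortExact f g) : h.shortComplex.ShortExact :=
  ModuleCat.shortComplex_shortExact _ h.exact h.inj h.surj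

theorem extVanish_fst (h : IsShortExact f g) {n : ℕ} (hX : ExtVanish A n X Y)
    (hX'' : ExtVanish A (n + 1) X'' Y) : ExtVanish A n X' Y :=
  subsingleton_of_forall_eq 0 fun x => by
    obtain ⟨y, rfl⟩ := Ext.contravariant_sequence_exact₁ h.shortExact _ x (add_comm 1 n)
      (hX''.elim _ _)
    rw [hX.elim y 0, Ext.comp_zero]

theorem extVanish_thd (h : IsShortExact f g) {n : ℕ} (hX : ExtVanish A (n + 1) X Y)
    (hX' : ExtVanish A n X' Y) : ExtVanish A (n + 1) X'' Y :=
  subsingleton_of_forall_eq 0 fun x => by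
    obtain ⟨y, rfl⟩ := Ext.contravariant_sequence_exact₃ h.shortExact _ x (hX.elim _ _)
      (add_comm 1 n)
    rw [hX'.elim y 0, Ext.comp_zero]

theorem extVanish_fst' (h : IsShortExact f g) {n : ℕ} (hX : ExtVanish A (n + 1) Y X)
    (hX'' : ExtVanish A n Y X'') : ExtVanish A (n + 1) Y X' :=
  subsingleton_of_forall_eq 0 fun x => by
    obtain ⟨y, rfl⟩ := Ext.covariant_sequence_exact₁ _ h.shortExact x (hX.elim _ _) rfl
    rw [hX''.elim y 0, Ext.zero_comp]

theorem extVanish_thd' (h : IsShortExact f g) {n : ℕ} (hX : ExtVanish A n Y X)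
    (hX' : ExtVanish A (n + 1) Y X') : ExtVanish A n Y X'' :=
  subsingleton_of_forall_eq 0 fun x => by
    obtain ⟨y, rfl⟩ := Ext.covariant_sequence_exact₃ _ h.shortExact x rfl (hX'.elim _ _)
    rw [hX.elim y 0, Ext.zero_comp]

theorem exists_comp_fst_eq (h : IsShortExact f g) (hX'' : ExtVanish A 1 X'' Y) (φ : X' →ₗ[A] Y) :
    ∃ ψ : X →ₗ[A] Y, ψ.comp f = φ := by
  obtain ⟨y, hy⟩ := Ext.contravariant_sequence_exact₁ h.shortExact _
    (Ext.mk₀ (ModuleCat.ofHom φ)) (add_zero 1) (hX''.elim _ _)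
  obtain ⟨ψ, rfl⟩ := Ext.homEquiv₀.symm.surjective y
  rw [Ext.homEquiv₀_symm_apply, Ext.mk₀_comp_mk₀] at hy
  exact ⟨ψ.hom, congrArg ModuleCat.Hom.hom ((Ext.mk₀_bijective _ _).1 hy)⟩

theorem extVanish_one_thd (h : IsShortExact f g) (hX : ExtVanish A 1 X Y)
    (hφ : ∀ φ : X' →ₗ[A] Y, ∃ ψ : X →ₗ[A] Y, ψ.comp f = φ) : ExtVanish A 1 X'' Y :=
  subsingleton_of_forall_eq 0 fun x => by
    obtain ⟨y, rfl⟩ := Ext.contravariant_sequence_exact₃ h.shortExact _ x (hX.elim _ _)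
      (add_zero 1)
    obtain ⟨φ, rfl⟩ := Ext.homEquiv₀.symm.surjective y
    obtain ⟨ψ, hψ⟩ := hφ φ.hom
    have hφψ : φ = ModuleCat.ofHom f ≫ ModuleCat.ofHom ψ := ModuleCat.hom_ext hψ.symm
    rw [Ext.homEquiv₀_symm_apply, hφψ, ← Ext.mk₀_comp_mk₀]
    exact h.shortExact.extClass_comp_assoc _

theorem exists_thd_comp_eq (h : IsShortExact f g) (hX' : ExtVanish A 1 Y X') (φ : Y →ₗ[A] X'') :
    ∃ ψ : Y →ₗ[A] X, g.comp ψ = φ := by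
  obtain ⟨y, hy⟩ := Ext.covariant_sequence_exact₃ _ h.shortExact
    (Ext.mk₀ (ModuleCat.ofHom φ)) (zero_add 1) (hX'.elim _ _)
  obtain ⟨ψ, rfl⟩ := Ext.homEquiv₀.symm.surjective y
  rw [Ext.homEquiv₀_symm_apply, Ext.mk₀_comp_mk₀] at hy
  exact ⟨ψ.hom, congrArg ModuleCat.Hom.hom ((Ext.mk₀_bijective _ _).1 hy)⟩

theorem extVanish_one_fst' (h : IsShortExact f g) (hX : ExtVanish A 1 Y X)
    (hφ : ∀ φ : Y →ₗ[A] X'', ∃ ψ : Y →ₗ[A] X, g.comp ψ = φ) : ExtVanish A 1 Y X' :=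
  subsingleton_of_forall_eq 0 fun x => by
    obtain ⟨y, rfl⟩ := Ext.covariant_sequence_exact₁ _ h.shortExact x (hX.elim _ _) (zero_add 1)
    obtain ⟨φ, rfl⟩ := Ext.homEquiv₀.symm.surjective y
    obtain ⟨ψ, hψ⟩ := hφ φ.hom
    have hφψ : φ = ModuleCat.ofHom ψ ≫ ModuleCat.ofHom g := ModuleCat.hom_ext hψ.symm
    rw [Ext.homEquiv₀_symm_apply, hφψ, ← Ext.mk₀_comp_mk₀, Ext.comp_assoc_of_second_deg_zero,
      h.shortExact.comp_extClass, Ext.comp_zero]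

theorem exact_postcomp (h : IsShortExact f g) :
    Exact (fun φ : Y →ₗ[A] X' => f.comp φ) (fun φ : Y →ₗ[A] X => g.comp φ) := by
  refine fun φ => ⟨fun hφ => ?_, ?_⟩
  · have hrange (y : Y) : φ y ∈ LinearMap.range f := (h.exact _).1 (LinearMap.congr_fun hφ y)
    let e := LinearEquiv.ofInjective f h.inj
    exact ⟨e.symm.toLinearMap.comp (φ.codRestrict _ hrange),
      LinearMap.ext fun y => congrArg Subtype.val (e.apply_symm_apply ⟨φ y, hrange y⟩)⟩
  · rintro ⟨ψ, rfl⟩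
    exact LinearMap.ext fun y => h.exact.apply_apply_eq_zero _

end IsShortExact

section ExtVanish

open CategoryTheory CategoryTheory.Abelian

variable {A : Type u} [Ring A] {X Y : Type u} [AddCommGroup X] [Module A X] [AddCommGroup Y]
  [Module A Y]

theorem ExtVanish.of_projective [Module.Projective A X] (n : ℕ) : ExtVanish A (n + 1) X Y :=
  have : Projective (ModuleCat.of A X) := inferInstance
  Ext.subsingleton_of_projective _ _ n

theorem ExtVanish.of_injective (hY : Module.Injective A Y) (n : ℕ) : ExtVanish A (n + 1) X Y :=
  have : Injective (ModuleCat.of A Y) := (Module.injective_iff_injective_object A Y).1 hY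
  Ext.subsingleton_of_injective _ _ n

variable (A X) in
theorem ResolutionData.exists_isProjResolution :
    ∃ Q : ResolutionData A X, Q.IsProjResolution := by
  let P := (inferInstance : HasProjectiveResolution (ModuleCat.of A X)).out.some
  refine ⟨⟨fun n => P.complex.X n, fun n => (P.complex.d (n + 1) n).hom, (P.π.f 0).hom⟩, ?_, ?_,
    ?_, fun n => ?_⟩
  · exact fun n => (IsProjective.iff_projective _).2 (P.projective n)
  · exact (ModuleCat.epi_iff_surjective _).1 (inferInstance : Epi (P.π.f 0))
  · exact (ShortComplex.ShortExact.moduleCat_exact_iff_function_exact _).1 P.exact₀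
  · exact (ShortComplex.ShortExact.moduleCat_exact_iff_function_exact _).1 (P.exact_succ n)

end ExtVanish

section LeftExactness

variable {A X' X X'' Y : Type*} [Ring A] [AddCommGroup X'] [Module A X']
  [AddCommGroup X] [Module A X] [AddCommGroup X''] [Module A X''] [AddCommGroup Y] [Module A Y]

theorem exact_precomp {f : X' →ₗ[A] X} {g : X →ₗ[A] X''} (hfg : Exact f g) (hg : Surjective g) :
    Exact (fun φ : X'' →ₗ[A] Y => φ.comp g) (fun φ : X →ₗ[A] Y => φ.comp f) := by
  refine fun φ => ⟨fun hφ => ?_, ?_⟩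
  · refine ⟨((LinearMap.range f).liftQ φ (LinearMap.range_le_ker_iff.2 hφ)).comp
      (hfg.linearEquivOfSurjective hg).symm.toLinearMap, LinearMap.ext fun x => ?_⟩
    simp
  · rintro ⟨ψ, rfl⟩
    exact LinearMap.ext fun x => (congrArg ψ (hfg.apply_apply_eq_zero x)).trans (map_zero ψ)

end LeftExactness

namespace ResolutionData

variable {A : Type u} [Ring A] {X Y : Type u} [AddCommGroup X] [Module A X] [AddCommGroup Y]
  [Module A Y] {Q : ResolutionData A X}

/-- The truncation `⋯ → P 2 → P 1` of a resolution of `X`, as a resolution of the first syzygy. -/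
abbrev syzygy (Q : ResolutionData A X) (h : Exact (Q.d 0) Q.ε) :
    ResolutionData A (LinearMap.ker Q.ε) where
  P n := Q.P (n + 1)
  d n := Q.d (n + 1)
  ε := (Q.d 0).codRestrict _ h.apply_apply_eq_zero

namespace IsProjResolution

theorem syzygy (hQ : Q.IsProjResolution) : (Q.syzygy hQ.exact0).IsProjResolution where
  proj n := hQ.proj (n + 1)
  surj := fun x => by
    obtain ⟨y, hy⟩ := (hQ.exact0 x).1 x.2
    exact ⟨y, Subtype.ext hy⟩
  exact0 x := by
    refine Iff.trans ?_ (hQ.exactSucc 0 x)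
    exact Subtype.ext_iff
  exactSucc n := hQ.exactSucc (n + 1)

theorem exact_precomp_zero_iff (hQ : Q.IsProjResolution) :
    Exact (fun f : Q.P 0 →ₗ[A] Y => f.comp (Q.d 0)) (fun f : Q.P 1 →ₗ[A] Y => f.comp (Q.d 1)) ↔
      ∀ φ : LinearMap.ker Q.ε →ₗ[A] Y,
        ∃ ψ : Q.P 0 →ₗ[A] Y, ψ.comp (LinearMap.ker Q.ε).subtype = φ := by
  have hsyz := hQ.syzygy
  constructor
  · intro h φ
    have hφ : (φ.comp (Q.syzygy hQ.exact0).ε).comp (Q.d 1) = 0 := by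
      rw [LinearMap.comp_assoc, hsyz.exact0.linearMap_comp_eq_zero, LinearMap.comp_zero]
    obtain ⟨ψ, hψ⟩ := (h _).1 hφ
    exact ⟨ψ, LinearMap.cancel_right hsyz.surj |>.1 hψ⟩
  · refine fun h f => ⟨fun hf => ?_, ?_⟩
    · obtain ⟨φ, rfl⟩ := (exact_precomp hsyz.exact0 hsyz.surj f).1 hf
      obtain ⟨ψ, rfl⟩ := h φ
      exact ⟨ψ, rfl⟩
    · rintro ⟨ψ, rfl⟩
      change ψ.comp ((Q.d 0).comp (Q.d 1)) = 0
      rw [(hQ.exactSucc 0).linearMap_comp_eq_zero, LinearMap.comp_zero]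

theorem exact_precomp_iff (hQ : Q.IsProjResolution) (j : ℕ) :
    Exact (fun f : Q.P j →ₗ[A] Y => f.comp (Q.d j))
        (fun f : Q.P (j + 1) →ₗ[A] Y => f.comp (Q.d (j + 1))) ↔ ExtVanish A (j + 1) X Y := by
  induction j generalizing X with
  | zero =>
    have := hQ.proj 0
    rw [hQ.exact_precomp_zero_iff]
    exact ⟨(IsShortExact.subtype_ker hQ.surj).extVanish_one_thd (.of_projective 0),
      fun h => (IsShortExact.subtype_ker hQ.surj).exists_comp_fst_eq h⟩
  | succ j ih =>
    have := hQ.proj 0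
    rw [show _ ↔ ExtVanish A (j + 1) _ Y from ih hQ.syzygy]
    exact ⟨(IsShortExact.subtype_ker hQ.surj).extVanish_thd (.of_projective _),
      (IsShortExact.subtype_ker hQ.surj).extVanish_fst (.of_projective j)⟩

end IsProjResolution

end ResolutionData

section ExtVanishAll

variable {A : Type u} [Ring A] {X Y : Type u} [AddCommGroup X] [Module A X] [AddCommGroup Y]
  [Module A Y]

theorem extVanishAll_iff : ExtVanishAll A X Y ↔ ∀ n, ExtVanish A (n + 1) X Y := by
  constructor
  · rintro ⟨Q, hQ, h⟩ n
    exact (hQ.exact_precomp_iff n).1 (h n)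
  · intro h
    obtain ⟨Q, hQ⟩ := ResolutionData.exists_isProjResolution A X
    exact ⟨Q, hQ, fun j => (hQ.exact_precomp_iff j).2 (h j)⟩

end ExtVanishAll

/-! ### Character modules -/

section Character

/-- The right module structure `(c · s) x = c (s · x)` on the characters of a left module. -/
instance {S X : Type u} [Ring S] [AddCommGroup X] [Module S X] : Module Sᵐᵒᵖ (CharacterModule X) :=
  Module.compHom (R := Sᵈᵐᵃ) (X →+ AddCircle (1 : ℚ)) (RingHom.id Sᵐᵒᵖ)

/-- The left module structure `(s · c) x = c (x · s)` on the characters of a right module. -/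
instance {S X : Type u} [Ring S] [AddCommGroup X] [Module Sᵐᵒᵖ X] : Module S (CharacterModule X) :=
  Module.compHom (R := Sᵐᵒᵖᵈᵐᵃ) (X →+ AddCircle (1 : ℚ)) (RingEquiv.opOp S).toRingHom

variable {X Y Z : Type u} [AddCommGroup X] [AddCommGroup Y] [AddCommGroup Z]

/-- The dual `f⁺ : Y⁺ → X⁺` of a map of abelian groups, where `X⁺ = Hom_ℤ(X, ℚ/ℤ)`. -/
def charDual (f : X →+ Y) : CharacterModule Y →+ CharacterModule X :=
  (CharacterModule.dual f.toIntLinearMap).toAddMonoidHom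

theorem charDual_injective_iff {f : X →+ Y} : Injective (charDual f) ↔ Surjective f :=
  CharacterModule.dual_injective_iff_surjective (f := f.toIntLinearMap)

theorem charDual_surjective_iff {f : X →+ Y} : Surjective (charDual f) ↔ Injective f :=
  CharacterModule.dual_surjective_iff_injective (f := f.toIntLinearMap)

theorem subsingleton_of_subsingleton_characterModule [Subsingleton (CharacterModule X)] :
    Subsingleton X :=
  subsingleton_of_forall_eq 0 fun _ => CharacterModule.eq_zero_of_character_apply fun c =>
    DFunLike.congr_fun (Subsingleton.elim c 0) _

theorem exact_charDual {f : X →+ Y} {g : Y →+ Z} (h : Exact f g) :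
    Exact (charDual g) (charDual f) := by
  refine fun c => ⟨fun hc => ?_, ?_⟩
  · have hexact : Exact f.toIntLinearMap g.toIntLinearMap.rangeRestrict := fun y =>
      Iff.trans Subtype.ext_iff (h y)
    obtain ⟨ψ, hψ⟩ := (exact_precomp hexact (LinearMap.surjective_rangeRestrict _)
      (c : Y →+ _).toIntLinearMap).1 (LinearMap.ext fun x => DFunLike.congr_fun hc x)
    obtain ⟨d, hd⟩ := CharacterModule.dual_surjective_of_injective
      (LinearMap.range g.toIntLinearMap).subtype Subtype.val_injective ψ.toAddMonoidHom
    refine ⟨d, DFunLike.ext _ _ fun y => ?_⟩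
    exact (DFunLike.congr_fun hd (g.toIntLinearMap.rangeRestrict y)).trans
      (DFunLike.congr_fun hψ y)
  · rintro ⟨c, rfl⟩
    exact DFunLike.ext _ _ fun x => (congrArg c (h.apply_apply_eq_zero x)).trans (map_zero c)

theorem exact_charDual_iff {f : X →+ Y} {g : Y →+ Z} :
    Exact (charDual g) (charDual f) ↔ Exact f g := by
  refine ⟨fun h y => ⟨fun hy => ?_, ?_⟩, exact_charDual⟩
  · rw [← AddMonoidHom.coe_range, SetLike.mem_coe, ← QuotientAddGroup.eq_zero_iff]
    refine CharacterModule.eq_zero_of_character_apply fun c => ?_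
    obtain ⟨d, hd⟩ := (h (c.comp (QuotientAddGroup.mk' f.range))).1 <| DFunLike.ext _ _ fun x =>
      (congrArg c ((QuotientAddGroup.eq_zero_iff _).2 ⟨x, rfl⟩)).trans (map_zero c)
    exact (DFunLike.congr_fun hd y).symm.trans ((congrArg d hy).trans (map_zero d))
  · rintro ⟨x, rfl⟩
    exact CharacterModule.eq_zero_of_character_apply fun c =>
      DFunLike.congr_fun (h.apply_apply_eq_zero c) x

end Character

section CharDualLinear

variable {S X Y Z : Type u} [Ring S] [AddCommGroup X] [Module S X] [AddCommGroup Y] [Module S Y]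
  [AddCommGroup Z] [Module S Z]

/-- The dual `f⁺ : Y⁺ → X⁺` of a map of left modules, as a map of right modules. -/
def charDualLinear (f : X →ₗ[S] Y) : CharacterModule Y →ₗ[Sᵐᵒᵖ] CharacterModule X where
  __ := charDual f.toAddMonoidHom
  map_smul' s c := DFunLike.ext _ _ fun x => congrArg c (map_smul f s.unop x).symm

theorem IsShortExact.charDualLinear {f : X →ₗ[S] Y} {g : Y →ₗ[S] Z} (h : IsShortExact f g) :
    IsShortExact (charDualLinear g) (charDualLinear f) where
  inj := charDual_injective_iff (f := g.toAddMonoidHom).2 h.surj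
  exact := exact_charDual (f := f.toAddMonoidHom) (g := g.toAddMonoidHom) h.exact
  surj := charDual_surjective_iff (f := f.toAddMonoidHom).2 h.inj

end CharDualLinear

/-! ### Characters of tensor products -/

namespace MTensor

section Adjunction

variable {S : Type u} [Ring S] {N N' N'' : Type u} [AddCommGroup N] [Module Sᵐᵒᵖ N]
  [AddCommGroup N'] [Module Sᵐᵒᵖ N'] [AddCommGroup N''] [Module Sᵐᵒᵖ N'']
  {T T' T'' : Type u} [AddCommGroup T] [Module S T] [AddCommGroup T'] [Module S T']
  [AddCommGroup T''] [Module S T'']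

theorem mk_add_left (n n' : N) (t : T) :
    (mk (n + n') t : MTensor S N T) = mk n t + mk n' t :=
  congrArg QuotientAddGroup.mk (TensorProduct.tmul_add t n n')

theorem mk_smul (s : S) (n : N) (t : T) :
    (mk n (s • t) : MTensor S N T) = mk (op s • n) t :=
  QuotientAddGroup.eq_iff_sub_mem.2 (AddSubgroup.subset_closure ⟨s, t, n, rfl⟩)

@[elab_as_elim]
theorem induction_on {p : MTensor S N T → Prop} (x : MTensor S N T) (zero : p 0)
    (mk : ∀ n t, p (mk n t)) (add : ∀ x y, p x → p y → p (x + y)) : p x := by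
  obtain ⟨x, rfl⟩ := QuotientAddGroup.mk_surjective x
  induction x with
  | zero => exact zero
  | tmul t n => exact mk n t
  | add x y hx hy => exact add _ _ hx hy

theorem hom_ext {A : Type*} [AddCommGroup A] {f g : MTensor S N T →+ A}
    (h : ∀ n t, f (mk n t) = g (mk n t)) : f = g := by
  ext x
  induction x using induction_on with
  | zero => rw [map_zero, map_zero]
  | mk n t => exact h n t
  | add x y hx hy => rw [map_add, map_add, hx, hy]

variable (S N T) in
/-- The universal biadditive map `(n, t) ↦ n ⊗ t`. -/
def mkHom : N →+ T →+ MTensor S N T :=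
  AddMonoidHom.mk' (fun n => AddMonoidHom.mk' (mk n) fun t t' =>
      congrArg QuotientAddGroup.mk (TensorProduct.add_tmul t t' n))
    fun n m => AddMonoidHom.ext (mk_add_left n m)

/-- The homomorphism on `N ⊗_S T` induced by a balanced biadditive map. -/
def lift {A : Type*} [AddCommGroup A] (f : N →+ T →+ A)
    (hf : ∀ (s : S) n t, f n (s • t) = f (op s • n) t) : MTensor S N T →+ A :=
  QuotientAddGroup.lift _ (TensorProduct.liftAddHom f.flip fun z t n => by simp) <| by
    refine (AddSubgroup.closure_le _).2 ?_
    rintro x ⟨s, t, n, rfl⟩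
    simp [AddMonoidHom.mem_ker, hf]

/-- The adjunction isomorphism `(N ⊗_S T)⁺ ≃ Hom_S(N, T⁺)`. -/
def charEquiv : CharacterModule (MTensor S N T) ≃+ (N →ₗ[Sᵐᵒᵖ] CharacterModule T) where
  toFun c :=
    { toFun := fun n => AddMonoidHom.comp c (mkHom S N T n)
      map_add' := fun n n' => DFunLike.ext _ _ fun t =>
        (congrArg c (mk_add_left n n' t)).trans (map_add c _ _)
      map_smul' := fun s n => DFunLike.ext _ _ fun t => congrArg c (mk_smul s.unop n t).symm }
  invFun φ := lift φ.toAddMonoidHom fun s n t =>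
    (DFunLike.congr_fun (map_smul φ (op s) n) t).symm
  left_inv _ := hom_ext fun _ _ => rfl
  right_inv _ := rfl
  map_add' _ _ := rfl

/-- The adjunction isomorphism `(N ⊗_S T)⁺ ≃ Hom_S(T, N⁺)`. -/
def charEquiv' : CharacterModule (MTensor S N T) ≃+ (T →ₗ[S] CharacterModule N) where
  toFun c :=
    { toFun := fun t => AddMonoidHom.comp c ((mkHom S N T).flip t)
      map_add' := fun t t' => DFunLike.ext _ _ fun n =>
        (congrArg c (map_add (mkHom S N T n) t t')).trans (map_add c _ _)
      map_smul' := fun s t => DFunLike.ext _ _ fun n => congrArg c (mk_smul s n t) }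
  invFun φ := lift (AddMonoidHom.flip φ.toAddMonoidHom) fun s n t =>
    DFunLike.congr_fun (map_smul φ s t) n
  left_inv _ := hom_ext fun _ _ => rfl
  right_inv _ := rfl
  map_add' _ _ := rfl

theorem exact_map_iff {f : N' →ₗ[Sᵐᵒᵖ] N} {g : N →ₗ[Sᵐᵒᵖ] N''} :
    Exact (map (T := T) f) (map (T := T) g) ↔
      Exact (fun φ : N'' →ₗ[Sᵐᵒᵖ] CharacterModule T => φ.comp g)
        (fun φ : N →ₗ[Sᵐᵒᵖ] CharacterModule T => φ.comp f) :=
  exact_charDual_iff.symm.trans <| .symm <| Exact.iff_of_ladder_addEquiv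
    (g₁₂ := (g.lcomp ℤ (CharacterModule T)).toAddMonoidHom)
    (g₂₃ := (f.lcomp ℤ (CharacterModule T)).toAddMonoidHom)
    charEquiv charEquiv charEquiv rfl rfl

theorem exact_lmap_iff {f : T' →ₗ[S] T} {g : T →ₗ[S] T''} :
    Exact (lmap (N := N) f) (lmap (N := N) g) ↔
      Exact (fun φ : T'' →ₗ[S] CharacterModule N => φ.comp g)
        (fun φ : T →ₗ[S] CharacterModule N => φ.comp f) :=
  exact_charDual_iff.symm.trans <| .symm <| Exact.iff_of_ladder_addEquiv
    (g₁₂ := (g.lcomp ℤ (CharacterModule N)).toAddMonoidHom)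
    (g₂₃ := (f.lcomp ℤ (CharacterModule N)).toAddMonoidHom)
    charEquiv' charEquiv' charEquiv' rfl rfl

theorem map_injective_iff {f : N' →ₗ[Sᵐᵒᵖ] N} :
    Injective (map (T := T) f) ↔
      Surjective (fun φ : N →ₗ[Sᵐᵒᵖ] CharacterModule T => φ.comp f) := by
  rw [← charDual_surjective_iff, ← EquivLike.comp_surjective _ (charEquiv (S := S)),
    ← EquivLike.surjective_comp (charEquiv (S := S) (N := N) (T := T))]
  rfl

theorem lmap_injective_iff {f : T' →ₗ[S] T} :
    Injective (lmap (N := N) f) ↔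
      Surjective (fun φ : T →ₗ[S] CharacterModule N => φ.comp f) := by
  rw [← charDual_surjective_iff, ← EquivLike.comp_surjective _ (charEquiv' (S := S)),
    ← EquivLike.surjective_comp (charEquiv' (S := S) (N := N) (T := T))]
  rfl

theorem map_surjective {g : N →ₗ[Sᵐᵒᵖ] N''} (hg : Surjective g) :
    Surjective (map (T := T) g) := fun x => by
  induction x using induction_on with
  | zero => exact ⟨0, map_zero _⟩
  | mk n t => exact (hg n).elim fun m hm => ⟨mk m t, congrArg (mk · t) hm⟩
  | add x y hx hy => exact hx.elim fun a ha => hy.elim fun b hb =>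
      ⟨a + b, by rw [map_add, ha, hb]⟩

theorem exact_map {f : N' →ₗ[Sᵐᵒᵖ] N} {g : N →ₗ[Sᵐᵒᵖ] N''} (hfg : Exact f g)
    (hg : Surjective g) : Exact (map (T := T) f) (map (T := T) g) :=
  exact_map_iff.2 (exact_precomp hfg hg)

end Adjunction

end MTensor

/-! ### Flat modules -/

section Flat

variable {S : Type u} [Ring S] {N : Type u} [AddCommGroup N] [Module Sᵐᵒᵖ N]
  {T : Type u} [AddCommGroup T] [Module S T]

theorem torVanishAll_iff :
    TorVanishAll S N T ↔ ∀ n, ExtVanish Sᵐᵒᵖ (n + 1) N (CharacterModule T) := by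
  constructor
  · rintro ⟨Q, hQ, h⟩ n
    exact (hQ.exact_precomp_iff n).1 (MTensor.exact_map_iff.1 (h n))
  · intro h
    obtain ⟨Q, hQ⟩ := ResolutionData.exists_isProjResolution Sᵐᵒᵖ N
    exact ⟨Q, hQ, fun n => MTensor.exact_map_iff.2 ((hQ.exact_precomp_iff n).2 (h n))⟩

/-- A left `S`-module `T` is flat if `- ⊗_S T` preserves injections of right `S`-modules. -/
def IsFlatLeftModule (S : Type u) [Ring S] (T : Type u) [AddCommGroup T] [Module S T] : Prop :=
  ∀ (X Y : Type u) [AddCommGroup X] [Module Sᵐᵒᵖ X] [AddCommGroup Y] [Module Sᵐᵒᵖ Y]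
    (g : X →ₗ[Sᵐᵒᵖ] Y), Injective g → Injective (MTensor.map (T := T) g)

theorem IsFlatLeftModule.injective_characterModule (hT : IsFlatLeftModule S T) :
    Module.Injective Sᵐᵒᵖ (CharacterModule T) where
  out X Y _ _ _ _ f hf g := by
    obtain ⟨ψ, rfl⟩ := MTensor.map_injective_iff.1 (hT X Y f hf) g
    exact ⟨ψ, fun _ => rfl⟩

theorem IsFlatRightModule.injective_characterModule (hN : IsFlatRightModule S N) :
    Module.Injective S (CharacterModule N) where
  out X Y _ _ _ _ f hf g := by
    obtain ⟨ψ, rfl⟩ := MTensor.lmap_injective_iff.1 (hN X Y f hf) g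
    exact ⟨ψ, fun _ => rfl⟩

-- The characters of `T ⊗ Y` are `Hom(T, Y⁺)`, and `Y⁺ → X⁺` is surjective.
theorem IsFlatLeftModule.of_projective [Module.Projective S T] : IsFlatLeftModule S T := by
  intro X Y _ _ _ _ g hg
  let gd : CharacterModule Y →ₗ[S] CharacterModule X :=
    { __ := charDual g.toAddMonoidHom
      map_smul' := fun s c => DFunLike.ext _ _ fun x => congrArg c (map_smul g (op s) x).symm }
  have hgd : Surjective gd := charDual_surjective_iff (f := g.toAddMonoidHom).2 hg
  refine charDual_surjective_iff.1 fun c => ?_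
  obtain ⟨φ, hφ⟩ := Module.projective_lifting_property gd (MTensor.charEquiv' c) hgd
  exact ⟨MTensor.charEquiv'.symm φ, MTensor.charEquiv'.injective hφ⟩

theorem IsFlatRightModule.exact_lmap (hN : IsFlatRightModule S N) {X Y Z : Type u}
    [AddCommGroup X] [Module S X] [AddCommGroup Y] [Module S Y] [AddCommGroup Z] [Module S Z]
    {f : X →ₗ[S] Y} {g : Y →ₗ[S] Z} (hfg : Exact f g) :
    Exact (MTensor.lmap (N := N) f) (MTensor.lmap (N := N) g) := by
  refine MTensor.exact_lmap_iff.2 fun φ => ⟨fun hφ => ?_, ?_⟩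
  · obtain ⟨ψ, hψ⟩ := (exact_precomp (g := g.rangeRestrict)
      (fun y => Iff.trans Subtype.ext_iff (hfg y)) g.surjective_rangeRestrict φ).1 hφ
    obtain ⟨χ, hχ⟩ := hN.injective_characterModule.out _
      (LinearMap.range g).subtype_injective ψ
    exact ⟨χ, LinearMap.ext fun y => (hχ _).trans (LinearMap.congr_fun hψ y)⟩
  · rintro ⟨ψ, rfl⟩
    exact LinearMap.ext fun x => (congrArg ψ (hfg.apply_apply_eq_zero x)).trans (map_zero ψ)

theorem IsFlatRightModule.extVanish (hN : IsFlatRightModule S N) (n : ℕ) (T : Type u)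
    [AddCommGroup T] [Module S T] : ExtVanish Sᵐᵒᵖ (n + 1) N (CharacterModule T) := by
  have hfree (n : ℕ) (X : Type u) : ExtVanish Sᵐᵒᵖ (n + 1) N (CharacterModule (X →₀ S)) :=
    .of_injective IsFlatLeftModule.of_projective.injective_characterModule n
  induction n generalizing T with
  | zero =>
    have hε := IsShortExact.subtype_ker (Finsupp.linearCombination_id_surjective S T)
    refine hε.charDualLinear.extVanish_one_fst' (hfree 0 T) fun φ => ?_
    obtain ⟨c, hc⟩ := charDual_surjective_iff.2 (hN _ _ _ hε.inj) (MTensor.charEquiv.symm φ)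
    exact ⟨MTensor.charEquiv c,
      (congrArg MTensor.charEquiv hc).trans (MTensor.charEquiv.apply_symm_apply φ)⟩
  | succ n ih =>
    have hε := IsShortExact.subtype_ker (Finsupp.linearCombination_id_surjective S T)
    exact hε.charDualLinear.extVanish_fst' (hfree (n + 1) T) (ih _)

end Flat

/-! ### Evaluation maps -/

section Evaluation

-- Makes `Hom_R(M, T)` a left `S`-module.
attribute [local instance] SMulCommClass.symm

theorem sum_smulRight_proj {A Y : Type*} [Ring A] [AddCommGroup Y] [Module A Y] {n : ℕ}
    (α : (Fin n → A) →ₗ[A] Y) : ∑ i, (LinearMap.proj i).smulRight (α (Pi.single i 1)) = α :=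
  LinearMap.ext fun p => by
    simp only [LinearMap.sum_apply, LinearMap.smulRight_apply, LinearMap.proj_apply, ← map_smul,
      ← map_sum, ← Pi.single_smul', smul_eq_mul, mul_one, Finset.univ_sum_single]

namespace MTensor

section HomEvaluation

variable {S R : Type u} [Ring S] [Ring R] {T : Type u} [AddCommGroup T] [Module S T]
  [Module Rᵐᵒᵖ T] [SMulCommClass S Rᵐᵒᵖ T] {F : Type u} [AddCommGroup F] [Module Sᵐᵒᵖ F]
  {M M' : Type u} [AddCommGroup M] [Module Rᵐᵒᵖ M] [AddCommGroup M'] [Module Rᵐᵒᵖ M']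

variable (S R T F M) in
/-- The tensor evaluation map `F ⊗_S Hom_R(M, T) → Hom_R(M, F ⊗_S T)`. -/
def homEval : MTensor S F (M →ₗ[Rᵐᵒᵖ] T) →+ (M →ₗ[Rᵐᵒᵖ] MTensor S F T) :=
  lift (AddMonoidHom.mk'
    (fun f => AddMonoidHom.mk' (fun h => (theta R f).comp h) fun h h' =>
      LinearMap.comp_add h h' _)
    fun f f' => AddMonoidHom.ext fun h => LinearMap.ext fun p => mk_add_left f f' (h p))
    fun s f h => LinearMap.ext fun p => mk_smul s f (h p)

theorem homEval_naturality (d : M →ₗ[Rᵐᵒᵖ] M') :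
    (d.lcomp ℤ (MTensor S F T)).toAddMonoidHom.comp (homEval S R T F M') =
      (homEval S R T F M).comp (lmap (d.lcomp S T)) :=
  hom_ext fun _ _ => rfl

variable (R) in
theorem homEval_lmap_smulRight {n : ℕ} (i : Fin n) (x : MTensor S F T) :
    homEval S R T F (Fin n → Rᵐᵒᵖ) (lmap (((LinearMap.proj i).lcomp S T).comp
      (LinearMap.ringLmapEquivSelf Rᵐᵒᵖ S T).symm.toLinearMap) x) =
        (LinearMap.proj i).smulRight x := by
  induction x using induction_on with
  | zero => rw [map_zero, map_zero, LinearMap.smulRight_zero]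
  | mk f t => exact LinearMap.ext fun p => (smul_mk R (p i) f t).symm
  | add x y hx hy =>
    rw [map_add, map_add, hx, hy]
    exact LinearMap.ext fun p => (smul_add (p i) x y).symm

theorem homEval_bijective_pi (n : ℕ) : Bijective (homEval S R T F (Fin n → Rᵐᵒᵖ)) := by
  let e (i : Fin n) : T →ₗ[S] ((Fin n → Rᵐᵒᵖ) →ₗ[Rᵐᵒᵖ] T) :=
    ((LinearMap.proj i).lcomp S T).comp (LinearMap.ringLmapEquivSelf Rᵐᵒᵖ S T).symm.toLinearMap
  let inv : ((Fin n → Rᵐᵒᵖ) →ₗ[Rᵐᵒᵖ] MTensor S F T) →+ MTensor S F ((Fin n → Rᵐᵒᵖ) →ₗ[Rᵐᵒᵖ] T) :=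
    AddMonoidHom.mk' (fun α => ∑ i, lmap (e i) (α (Pi.single i 1))) fun α β => by
      simp only [LinearMap.add_apply, map_add, Finset.sum_add_distrib]
  have hleft : inv.comp (homEval S R T F _) = AddMonoidHom.id _ := hom_ext fun f h =>
    (map_sum (mkHom S F _ f) (fun i => e i (h (Pi.single i 1))) _).symm.trans
      (congrArg (mk f) (sum_smulRight_proj h))
  refine bijective_iff_has_inverse.2 ⟨inv, DFunLike.congr_fun hleft, fun α => ?_⟩
  exact (map_sum _ _ _).trans <| (Finset.sum_congr rfl fun i _ =>
    homEval_lmap_smulRight R i _).trans (sum_smulRight_proj α)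

theorem homEval_bijective (hF : IsFlatRightModule S F) [Module.FinitePresentation Rᵐᵒᵖ M] :
    Bijective (homEval S R T F M) := by
  obtain ⟨n, m, g, f, hg, hfg⟩ := Module.FinitePresentation.exists_fin' Rᵐᵒᵖ M
  exact AddMonoidHom.bijective_of_bijective_of_injective_of_left_exact
    (lmap (g.lcomp S T)) (lmap (f.lcomp S T))
    (g.lcomp ℤ (MTensor S F T)).toAddMonoidHom (f.lcomp ℤ (MTensor S F T)).toAddMonoidHom
    _ _ _ (homEval_naturality g) (homEval_naturality f)
    (hF.exact_lmap (exact_precomp hfg hg)) (exact_precomp hfg hg)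
    (homEval_bijective_pi n) (homEval_bijective_pi m).1
    (hF _ _ _ hg.injective_linearMapComp_right) hg.injective_linearMapComp_right

end HomEvaluation

section CharEvaluation

variable {R : Type u} [Ring R] {X M M' : Type u} [AddCommGroup X] [Module Rᵐᵒᵖ X]
  [AddCommGroup M] [Module Rᵐᵒᵖ M] [AddCommGroup M'] [Module Rᵐᵒᵖ M']

variable (R X M) in
/-- The evaluation map `M ⊗_R X⁺ → Hom_R(M, X)⁺`. -/
def charEval : MTensor R M (CharacterModule X) →+ CharacterModule (M →ₗ[Rᵐᵒᵖ] X) :=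
  lift (AddMonoidHom.mk'
    (fun p => AddMonoidHom.mk'
      (fun c => AddMonoidHom.comp c (LinearMap.applyₗ' ℤ p : (M →ₗ[Rᵐᵒᵖ] X) →ₗ[ℤ] X).toAddMonoidHom)
      fun _ _ => rfl)
    fun p p' => AddMonoidHom.ext fun c => DFunLike.ext _ _ fun h =>
      (congrArg c (map_add h p p')).trans (map_add c _ _))
    fun r p c => DFunLike.ext _ _ fun h => congrArg c (map_smul h (op r) p).symm

theorem charEval_naturality (d : M →ₗ[Rᵐᵒᵖ] M') :
    (charDual (d.lcomp ℤ X).toAddMonoidHom).comp (charEval R X M) =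
      (charEval R X M').comp (map d) :=
  hom_ext fun _ _ => rfl

theorem charEval_bijective_pi (n : ℕ) : Bijective (charEval R X (Fin n → Rᵐᵒᵖ)) := by
  let e (i : Fin n) : X →+ ((Fin n → Rᵐᵒᵖ) →ₗ[Rᵐᵒᵖ] X) := AddMonoidHom.mk'
    (LinearMap.proj i : (Fin n → Rᵐᵒᵖ) →ₗ[Rᵐᵒᵖ] Rᵐᵒᵖ).smulRight fun x y =>
      LinearMap.ext fun p => smul_add (p i) x y
  let inv : CharacterModule ((Fin n → Rᵐᵒᵖ) →ₗ[Rᵐᵒᵖ] X) →+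
      MTensor R (Fin n → Rᵐᵒᵖ) (CharacterModule X) :=
    ∑ i, (mkHom R (Fin n → Rᵐᵒᵖ) (CharacterModule X) (Pi.single i 1)).comp (charDual (e i))
  have hleft : inv.comp (charEval R X _) = AddMonoidHom.id _ := hom_ext fun p c => calc
    inv (charEval R X _ (mk p c)) = ∑ i, mk (Pi.single i 1) ((p i).unop • c) :=
      AddMonoidHom.finsetSum_apply _ _ _
    _ = ∑ i, mk (Pi.single i (p i)) c :=
      Finset.sum_congr rfl fun i _ => by
        rw [mk_smul, op_unop, ← Pi.single_smul', smul_eq_mul, mul_one]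
    _ = mk (∑ i, Pi.single i (p i)) c :=
      (map_sum ((mkHom R (Fin n → Rᵐᵒᵖ) (CharacterModule X)).flip c) _ _).symm
    _ = mk p c := by rw [Finset.univ_sum_single]
  refine bijective_iff_has_inverse.2 ⟨inv, DFunLike.congr_fun hleft, fun c => ?_⟩
  refine DFunLike.ext _ _ fun h => ?_
  have hsum : charEval R X _ (inv c) =
      ∑ i, charEval R X _ (mk (Pi.single i 1) (charDual (e i) c)) :=
    (congrArg _ (AddMonoidHom.finsetSum_apply _ _ c)).trans (map_sum _ _ _)
  calc charEval R X _ (inv c) h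
      = ∑ i, c (e i (h (Pi.single i 1))) :=
        (congrArg (fun c' : CharacterModule _ => c' h) hsum).trans
          (AddMonoidHom.finsetSum_apply _ _ h)
    _ = c h := (map_sum c _ _).symm.trans (congrArg c (sum_smulRight_proj h))

theorem charEval_bijective [Module.FinitePresentation Rᵐᵒᵖ M] :
    Bijective (charEval R X M) := by
  obtain ⟨n, m, g, f, hg, hfg⟩ := Module.FinitePresentation.exists_fin' Rᵐᵒᵖ M
  exact AddMonoidHom.bijective_of_surjective_of_bijective_of_right_exact
    (map f) (map g) (charDual (f.lcomp ℤ X).toAddMonoidHom) (charDual (g.lcomp ℤ X).toAddMonoidHom)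
    _ _ _ (charEval_naturality f) (charEval_naturality g) (exact_map hfg hg)
    (exact_charDual (exact_precomp hfg hg)) (charEval_bijective_pi m).2
    (charEval_bijective_pi n) (map_surjective hg)
    (charDual_surjective_iff.2 hg.injective_linearMapComp_right)

end CharEvaluation

end MTensor

end Evaluation

/-! ### Flat modules in the Auslander class -/

theorem HasFGProjResolution.finitePresentation {A : Type u} [Ring A] {X : Type u} [AddCommGroup X]
    [Module A X] (h : HasFGProjResolution A X) : Module.FinitePresentation A X := by
  obtain ⟨Q, hQ, hfin⟩ := h
  have := hQ.proj 0
  have := hfin 0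
  have := hfin 1
  have := Module.finitePresentation_of_projective A (Q.P 0)
  refine Module.finitePresentation_of_surjective Q.ε hQ.surj ?_
  rw [hQ.exact0.linearMap_ker_eq]
  exact Submodule.FG.of_finite

section Flat

attribute [local instance] SMulCommClass.symm

variable {S R : Type u} [Ring S] [Ring R] {T : Type u} [AddCommGroup T] [Module S T]
  [Module Rᵐᵒᵖ T] [SMulCommClass S Rᵐᵒᵖ T] {F : Type u} [AddCommGroup F] [Module Sᵐᵒᵖ F]

theorem IsFlatRightModule.extVanishAll_tensor (hF : IsFlatRightModule S F) {M : Type u}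
    [AddCommGroup M] [Module Rᵐᵒᵖ M] (hM : HasFGProjResolution Rᵐᵒᵖ M)
    (hMT : ExtVanishAll Rᵐᵒᵖ M T) : ExtVanishAll Rᵐᵒᵖ M (MTensor S F T) := by
  obtain ⟨Q, hQ, hfin⟩ := hM
  refine ⟨Q, hQ, fun j => ?_⟩
  have hexact := (hQ.exact_precomp_iff j).2 (extVanishAll_iff.1 hMT j)
  have hfp (n : ℕ) : Module.FinitePresentation Rᵐᵒᵖ (Q.P n) :=
    have := hQ.proj n
    have := hfin n
    Module.finitePresentation_of_projective Rᵐᵒᵖ (Q.P n)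
  let e (n : ℕ) := AddEquiv.ofBijective (MTensor.homEval S R T F (Q.P n))
    (MTensor.homEval_bijective hF)
  exact (Exact.iff_of_ladder_addEquiv (e j) (e (j + 1)) (e (j + 2))
    (MTensor.homEval_naturality (Q.d j)) (MTensor.homEval_naturality (Q.d (j + 1)))).2
    (hF.exact_lmap (f := (Q.d j).lcomp S T) (g := (Q.d (j + 1)).lcomp S T) hexact)

theorem MTensor.mk_one_bijective {M : Type u} [AddCommGroup M] [Module S M] (e : S ≃ₗ[S] M) :
    Bijective fun f : F => (mk f (e 1) : MTensor S F M) := by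
  let inv : MTensor S F M →+ F := lift
    (AddMonoidHom.mk' (fun f => AddMonoidHom.mk' (fun m => op (e.symm m) • f) fun m m' => by
      rw [map_add, op_add, add_smul]) fun f f' => AddMonoidHom.ext fun m => smul_add _ f f')
    fun s f m => by simp [mul_smul]
  have hinv : ((mkHom S F M).flip (e 1)).comp inv = AddMonoidHom.id _ := hom_ext fun f m => by
    change mk (op (e.symm m) • f) (e 1) = mk f m
    rw [← mk_smul, ← map_smul, smul_eq_mul, mul_one, e.apply_symm_apply]
  refine bijective_iff_has_inverse.2 ⟨inv, fun f => ?_, DFunLike.congr_fun hinv⟩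
  change op (e.symm (e 1)) • f = f
  rw [e.symm_apply_apply, op_one, one_smul]

theorem IsFlatRightModule.thetaFun_bijective (hF : IsFlatRightModule S F)
    [Module.FinitePresentation Rᵐᵒᵖ T] (hS : Bijective (leftHomothety S R T)) :
    Bijective (MTensor.thetaFun S F T R) := by
  let e : S ≃ₗ[S] (T →ₗ[Rᵐᵒᵖ] T) :=
    LinearEquiv.ofBijective (LinearMap.toSpanSingleton S _ LinearMap.id) hS
  have he : e 1 = LinearMap.id := one_smul S _
  have h := (MTensor.homEval_bijective (M := T) hF).comp (MTensor.mk_one_bijective e)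
  rwa [he] at h

theorem IsFlatRightModule.inAuslanderClass (hF : IsFlatRightModule S F)
    (hT : HasFGProjResolution Rᵐᵒᵖ T) (hS : Bijective (leftHomothety S R T))
    (hTT : ExtVanishAll Rᵐᵒᵖ T T) : InAuslanderClass S R T F where
  torVanish := torVanishAll_iff.2 fun n => hF.extVanish n T
  extVanish := hF.extVanishAll_tensor hT hTT
  thetaBij := have := hT.finitePresentation; hF.thetaFun_bijective hS

end Flat

/-- A right `R`-module `T` is tensorly faithful if `T ⊗_R M = 0` implies `M = 0`: the one-sided
version of `IsTensorlyFaithful`. -/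
def IsRightTensorFaithful (R : Type u) [Ring R] (T : Type u) [AddCommGroup T] [Module Rᵐᵒᵖ T] :
    Prop :=
  ∀ (M : Type u) [AddCommGroup M] [Module R M], Subsingleton (MTensor R T M) → Subsingleton M

theorem subsingleton_of_subsingleton_hom {R : Type u} [Ring R] {T X : Type u} [AddCommGroup T]
    [Module Rᵐᵒᵖ T] [Module.FinitePresentation Rᵐᵒᵖ T] [AddCommGroup X] [Module Rᵐᵒᵖ X]
    (hT : IsRightTensorFaithful R T) [Subsingleton (T →ₗ[Rᵐᵒᵖ] X)] : Subsingleton X := by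
  have : Subsingleton (CharacterModule (T →ₗ[Rᵐᵒᵖ] X)) :=
    ⟨fun c c' => DFunLike.ext _ _ fun φ => by rw [Subsingleton.elim φ 0, map_zero, map_zero]⟩
  have : Subsingleton (MTensor R T (CharacterModule X)) :=
    (MTensor.charEval_bijective (R := R)).1.subsingleton
  have := hT (CharacterModule X) this
  exact subsingleton_of_subsingleton_characterModule

/-! ### Stability of the Auslander class -/

namespace MTensor

variable {S R : Type u} [Ring S] [Ring R] {N N' : Type u} [AddCommGroup N] [Module Sᵐᵒᵖ N]
  [AddCommGroup N'] [Module Sᵐᵒᵖ N'] {T : Type u} [AddCommGroup T] [Module S T]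
  [Module Rᵐᵒᵖ T] [SMulCommClass S Rᵐᵒᵖ T]

variable (R T) in
/-- The map `g ⊗ T : N ⊗_S T → N' ⊗_S T` as a homomorphism of right `R`-modules. -/
def mapR (g : N →ₗ[Sᵐᵒᵖ] N') : MTensor S N T →ₗ[Rᵐᵒᵖ] MTensor S N' T where
  __ := map g
  map_smul' ρ x := DFunLike.congr_fun (hom_ext
    (f := (map g).comp (DistribSMul.toAddMonoidHom _ ρ))
    (g := (DistribSMul.toAddMonoidHom _ ρ).comp (map g)) fun n t =>
      (congrArg (map g) (smul_mk R ρ n t)).trans (smul_mk R ρ (g n) t).symm) x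

variable (S N T R) in
/-- The natural map `θ_N` as a homomorphism of additive groups. -/
def thetaHom : N →+ (T →ₗ[Rᵐᵒᵖ] MTensor S N T) :=
  AddMonoidHom.mk' (thetaFun S N T R) fun n n' => LinearMap.ext fun t => mk_add_left n n' t

variable (R T) in
/-- The map `Hom_R(T, N ⊗_S T) → Hom_R(T, N' ⊗_S T)` induced by `g : N → N'`. -/
def homMapR (g : N →ₗ[Sᵐᵒᵖ] N') :
    (T →ₗ[Rᵐᵒᵖ] MTensor S N T) →+ (T →ₗ[Rᵐᵒᵖ] MTensor S N' T) :=
  AddMonoidHom.mk' (mapR R T g).comp (LinearMap.comp_add · · _)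

variable (R T) in
theorem thetaHom_naturality (g : N →ₗ[Sᵐᵒᵖ] N') :
    (homMapR R T g).comp (thetaHom S R N T) = (thetaHom S R N' T).comp g.toAddMonoidHom :=
  rfl

theorem map_injective_of_thetaFun [Module.FinitePresentation Rᵐᵒᵖ T]
    (hT : IsRightTensorFaithful R T) {f : N →ₗ[Sᵐᵒᵖ] N'} (hf : Injective f)
    (hN : Surjective (thetaFun S N T R)) (hN' : Injective (thetaFun S N' T R)) :
    Injective (map (T := T) f) := by
  have : Subsingleton (T →ₗ[Rᵐᵒᵖ] LinearMap.ker (mapR R T f)) := by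
    refine subsingleton_of_forall_eq 0 fun φ => ?_
    obtain ⟨n, hn⟩ := hN ((LinearMap.ker (mapR R T f)).subtype.comp φ)
    have hfn : thetaFun S N' T R (f n) = thetaFun S N' T R 0 := by
      refine LinearMap.ext fun t => ?_
      calc mapR R T f (thetaFun S N T R n t)
          = mapR R T f (φ t) := by rw [hn]; rfl
        _ = 0 := (φ t).2
        _ = thetaHom S R N' T 0 t := by rw [map_zero, LinearMap.zero_apply]
    rw [hf ((hN' hfn).trans (map_zero f).symm)] at hn
    refine LinearMap.ext fun t => Subtype.ext ?_
    exact (LinearMap.congr_fun hn t).symm.trans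
      (LinearMap.congr_fun (map_zero (thetaHom S R N T)) t)
  have : Subsingleton (LinearMap.ker (mapR R T f)) := subsingleton_of_subsingleton_hom hT
  exact LinearMap.ker_eq_bot.1 (Submodule.subsingleton_iff_eq_bot.1 this)

end MTensor

namespace IsShortExact

variable {S R : Type u} [Ring S] [Ring R] {N' N N'' : Type u} [AddCommGroup N'] [Module Sᵐᵒᵖ N']
  [AddCommGroup N] [Module Sᵐᵒᵖ N] [AddCommGroup N''] [Module Sᵐᵒᵖ N'']
  {T : Type u} [AddCommGroup T] [Module S T] [Module Rᵐᵒᵖ T] [SMulCommClass S Rᵐᵒᵖ T]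
  {f : N' →ₗ[Sᵐᵒᵖ] N} {g : N →ₗ[Sᵐᵒᵖ] N''}

variable (R) in
theorem mapR (h : IsShortExact f g) (hinj : Injective (MTensor.map (T := T) f)) :
    IsShortExact (MTensor.mapR R T f) (MTensor.mapR R T g) :=
  ⟨hinj, MTensor.exact_map h.exact h.surj, MTensor.map_surjective h.surj⟩

theorem thetaFun_injective_fst (h : IsShortExact f g)
    (hN : Injective (MTensor.thetaFun S N T R)) : Injective (MTensor.thetaFun S N' T R) :=
  .of_comp (f := MTensor.homMapR R T f) (hN.comp h.inj)

theorem thetaFun_bijective_fst (h : IsShortExact f g)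
    (hinj : Injective (MTensor.map (T := T) f)) (hN : Bijective (MTensor.thetaFun S N T R))
    (hN'' : Injective (MTensor.thetaFun S N'' T R)) : Bijective (MTensor.thetaFun S N' T R) :=
  AddMonoidHom.bijective_of_bijective_of_injective_of_left_exact
    f.toAddMonoidHom g.toAddMonoidHom (MTensor.homMapR R T f) (MTensor.homMapR R T g)
    (MTensor.thetaHom S R N' T) (MTensor.thetaHom S R N T) (MTensor.thetaHom S R N'' T)
    (MTensor.thetaHom_naturality R T f) (MTensor.thetaHom_naturality R T g) h.exact
    (h.mapR R hinj).exact_postcomp hN hN'' h.inj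
    (fun _ _ hφψ => LinearMap.ext fun t => hinj (LinearMap.congr_fun hφψ t))

theorem thetaFun_bijective_thd (h : IsShortExact f g)
    (hinj : Injective (MTensor.map (T := T) f)) (hN' : InAuslanderClass S R T N')
    (hN : Bijective (MTensor.thetaFun S N T R)) : Bijective (MTensor.thetaFun S N'' T R) :=
  AddMonoidHom.bijective_of_surjective_of_bijective_of_right_exact
    f.toAddMonoidHom g.toAddMonoidHom (MTensor.homMapR R T f) (MTensor.homMapR R T g)
    (MTensor.thetaHom S R N' T) (MTensor.thetaHom S R N T) (MTensor.thetaHom S R N'' T)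
    (MTensor.thetaHom_naturality R T f) (MTensor.thetaHom_naturality R T g) h.exact
    (h.mapR R hinj).exact_postcomp hN'.thetaBij.2 hN h.surj
    ((h.mapR R hinj).exists_thd_comp_eq (extVanishAll_iff.1 hN'.extVanish 0))

theorem inAuslanderClass_thd [Module.FinitePresentation Rᵐᵒᵖ T]
    (hT : IsRightTensorFaithful R T) (h : IsShortExact f g)
    (hN' : InAuslanderClass S R T N') (hN : InAuslanderClass S R T N) :
    InAuslanderClass S R T N'' := by
  have hinj := MTensor.map_injective_of_thetaFun hT h.inj hN'.thetaBij.2 hN.thetaBij.1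
  have htor' := torVanishAll_iff.1 hN'.torVanish
  have htor := torVanishAll_iff.1 hN.torVanish
  have hext' := extVanishAll_iff.1 hN'.extVanish
  have hext := extVanishAll_iff.1 hN.extVanish
  refine ⟨torVanishAll_iff.2 fun n => ?_, extVanishAll_iff.2 fun n => ?_,
    h.thetaFun_bijective_thd hinj hN' hN.thetaBij⟩
  · cases n with
    | zero => exact h.extVanish_one_thd (htor 0) (MTensor.map_injective_iff.1 hinj)
    | succ n => exact h.extVanish_thd (htor (n + 1)) (htor' n)
  · exact (h.mapR R hinj).extVanish_thd' (hext n) (hext' (n + 1))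

end IsShortExact

/-! ### Cycles of acyclic flat complexes -/

namespace ZComplex

section Cycles

variable {A : Type u} [Ring A] {C : ZComplex A}

/-- The differential `C^i → C^{i+1}`, corestricted to the cycles `Z^{i+1} = ker d^{i+1}`. -/
def toCycles (hC : C.IsExact) (i : ℤ) : C.P i →ₗ[A] LinearMap.ker (C.d (i + 1)) :=
  (C.d i).codRestrict _ (hC i).apply_apply_eq_zero

theorem isShortExact_cycles (hC : C.IsExact) (i : ℤ) :
    IsShortExact (LinearMap.ker (C.d i)).subtype (toCycles hC i) where
  inj := Subtype.val_injective
  exact := fun x => Iff.trans Subtype.ext_iff (LinearMap.exact_subtype_ker_map (C.d i) x)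
  surj := fun x => ((hC i _).1 x.2).imp fun _ hy => Subtype.ext hy

theorem extVanish_cycles (hC : C.IsExact) {Y : Type u} [AddCommGroup Y] [Module A Y]
    (hCY : ∀ i n, ExtVanish A (n + 1) (C.P i) Y)
    (hexact : ∀ i, Exact (fun φ : C.P (i + 1 + 1) →ₗ[A] Y => φ.comp (C.d (i + 1)))
      (fun φ : C.P (i + 1) →ₗ[A] Y => φ.comp (C.d i))) (i : ℤ) (n : ℕ) :
    ExtVanish A (n + 1) (LinearMap.ker (C.d i)) Y := by
  induction n generalizing i with
  | zero =>
    obtain ⟨i, rfl⟩ : ∃ j : ℤ, i = j + 1 + 1 + 1 := ⟨i - 3, by ring⟩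
    refine (isShortExact_cycles hC (i + 1 + 1)).extVanish_one_thd (hCY _ 0) fun φ => ?_
    obtain ⟨ψ, hψ⟩ := (hexact i (φ.comp (toCycles hC (i + 1)))).1 <|
      LinearMap.ext fun x => (congrArg φ ((isShortExact_cycles hC (i + 1)).exact _ |>.2
        ⟨⟨C.d i x, (hC i).apply_apply_eq_zero x⟩, rfl⟩)).trans (map_zero φ)
    exact ⟨ψ, (LinearMap.cancel_right (isShortExact_cycles hC (i + 1)).surj).1 hψ⟩
  | succ n ih =>
    obtain ⟨i, rfl⟩ : ∃ j : ℤ, i = j + 1 := ⟨i - 1, by ring⟩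
    exact (isShortExact_cycles hC i).extVanish_thd (hCY i (n + 1)) (ih i)

end Cycles

section FTotallyAcyclic

variable {S : Type u} [Ring S] {C : ZComplex Sᵐᵒᵖ}

/-- The complexes of flat right modules whose cycles are the Gorenstein flat modules: exact, and
exact after tensoring with any injective left module. -/
structure IsFTotallyAcyclic (C : ZComplex Sᵐᵒᵖ) : Prop where
  flat : ∀ i, IsFlatRightModule S (C.P i)
  exact : C.IsExact
  exact_map : ∀ (I : Type u) [AddCommGroup I] [Module S I], Module.Injective S I →
    ∀ i, Exact (MTensor.map (T := I) (C.d i)) (MTensor.map (T := I) (C.d (i + 1)))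

namespace IsFTotallyAcyclic

theorem extVanish_cycles_of_injective (hC : C.IsFTotallyAcyclic) {I : Type u} [AddCommGroup I]
    [Module S I] (hI : Module.Injective S I) (i : ℤ) (n : ℕ) :
    ExtVanish Sᵐᵒᵖ (n + 1) (LinearMap.ker (C.d i)) (CharacterModule I) :=
  extVanish_cycles hC.exact (fun i n => (hC.flat i).extVanish n I)
    (fun i => MTensor.exact_map_iff.1 (hC.exact_map I hI i)) i n

theorem extVanish_cycles_of_flatResolution (hC : C.IsFTotallyAcyclic) {m : ℕ}
    {M : ModuleCat.{u} S} (hM : HasClassResolution S (fun P => IsFlatLeftModule S P) m M)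
    (i : ℤ) (n : ℕ) : ExtVanish Sᵐᵒᵖ (n + 1) (LinearMap.ker (C.d i)) (CharacterModule M) := by
  induction m generalizing M i n with
  | zero => exact .of_injective (IsFlatLeftModule.injective_characterModule hM) n
  | succ m ih =>
    obtain ⟨e, he, hker⟩ := hM
    have hdual := (IsShortExact.subtype_ker e.surj).charDualLinear
    refine (isShortExact_cycles hC.exact i).extVanish_fst ((hC.flat i).extVanish n M) ?_
    exact hdual.extVanish_fst' (.of_injective he.injective_characterModule (n + 1))
      (ih hker (i + 1) n)

theorem extVanish_cycles_of_injectiveCoresolution (hC : C.IsFTotallyAcyclic) {m : ℕ}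
    {M : ModuleCat.{u} S} (hM : HasClassCoresolution S (fun E => Module.Injective S E) m M)
    (i : ℤ) (n : ℕ) : ExtVanish Sᵐᵒᵖ (n + 1) (LinearMap.ker (C.d i)) (CharacterModule M) := by
  induction m generalizing M n with
  | zero => exact hC.extVanish_cycles_of_injective hM i n
  | succ m ih =>
    obtain ⟨e, he, hcoker⟩ := hM
    exact (IsShortExact.mkQ_range e.inj).charDualLinear.extVanish_thd'
      (hC.extVanish_cycles_of_injective he i n) (ih hcoker (n + 1))

end IsFTotallyAcyclic

end FTotallyAcyclic

section AuslanderClass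

variable {S R : Type u} [Ring S] [Ring R] {T : Type u} [AddCommGroup T] [Module S T]
  [Module Rᵐᵒᵖ T] [SMulCommClass S Rᵐᵒᵖ T] {C : ZComplex Sᵐᵒᵖ}

theorem inAuslanderClass_cycles (hC : C.IsExact) (hCT : ∀ i, InAuslanderClass S R T (C.P i))
    (htor : ∀ i, TorVanishAll S (LinearMap.ker (C.d i)) T) (i : ℤ) :
    InAuslanderClass S R T (LinearMap.ker (C.d i)) := by
  have hinj (i : ℤ) : Injective (MTensor.map (T := T) (LinearMap.ker (C.d i)).subtype) :=
    MTensor.map_injective_iff.2 ((isShortExact_cycles hC i).exists_comp_fst_eq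
      (torVanishAll_iff.1 (htor (i + 1)) 0))
  have htheta (i : ℤ) : Bijective (MTensor.thetaFun S (LinearMap.ker (C.d i)) T R) :=
    (isShortExact_cycles hC i).thetaFun_bijective_fst (hinj i) (hCT i).thetaBij
      ((isShortExact_cycles hC (i + 1)).thetaFun_injective_fst (hCT (i + 1)).thetaBij.1)
  refine ⟨htor i, extVanishAll_iff.2 fun n => ?_, htheta i⟩
  induction n generalizing i with
  | zero =>
    refine ((isShortExact_cycles hC i).mapR R (hinj i)).extVanish_one_fst'
      (extVanishAll_iff.1 (hCT i).extVanish 0) fun φ => ?_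
    obtain ⟨z, rfl⟩ := (htheta (i + 1)).2 φ
    obtain ⟨x, rfl⟩ := (isShortExact_cycles hC i).surj z
    exact ⟨MTensor.theta R x, rfl⟩
  | succ n ih =>
    exact ((isShortExact_cycles hC i).mapR R (hinj i)).extVanish_fst'
      (extVanishAll_iff.1 (hCT i).extVanish (n + 1)) (ih (i + 1))

end AuslanderClass

end ZComplex

/-! ### Modules of finite Gorenstein flat dimension -/

theorem HasClassResolution.mono {A : Type u} [Ring A] {C D : ModuleCat.{u} A → Prop}
    (hCD : ∀ M, C M → D M) {n : ℕ} {M : ModuleCat.{u} A} (h : HasClassResolution A C n M) :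
    HasClassResolution A D n M := by
  induction n generalizing M with
  | zero => exact hCD M h
  | succ n ih => exact h.imp fun _ he => ⟨hCD _ he.1, ih he.2⟩

/-- The flat dimension of the left `S`-module `T` is at most `n`. -/
def LeftFlatDimLE (S : Type u) [Ring S] (T : Type u) [AddCommGroup T] [Module S T] (n : ℕ) : Prop :=
  HasClassResolution S (fun P => IsFlatLeftModule S P) n (ModuleCat.of S T)

theorem ProjDimLE.leftFlatDimLE {S : Type u} [Ring S] {T : Type u} [AddCommGroup T] [Module S T]
    {n : ℕ} (h : ProjDimLE S T n) : LeftFlatDimLE S T n :=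
  HasClassResolution.mono (fun _ (_ : Module.Projective S _) => IsFlatLeftModule.of_projective) h

section FiniteGfd

variable {S R : Type u} [Ring S] [Ring R] {T : Type u} [AddCommGroup T] [Module S T]
  [Module Rᵐᵒᵖ T] [SMulCommClass S Rᵐᵒᵖ T]

theorem InAuslanderClass.of_hasClassResolution [Module.FinitePresentation Rᵐᵒᵖ T]
    (hT : IsRightTensorFaithful R T) {n : ℕ} {N : ModuleCat.{u} Sᵐᵒᵖ}
    (hN : HasClassResolution Sᵐᵒᵖ (fun G => InAuslanderClass S R T G) n N) :
    InAuslanderClass S R T N := by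
  induction n generalizing N with
  | zero => exact hN
  | succ n ih =>
    obtain ⟨e, he, hker⟩ := hN
    exact (IsShortExact.subtype_ker e.surj).inAuslanderClass_thd hT (ih hker) he

theorem IsGorensteinFlat.exists_isShortExact {G : Type u} [AddCommGroup G] [Module Sᵐᵒᵖ G]
    (hG : IsGorensteinFlat S G) : ∃ C : ZComplex Sᵐᵒᵖ, C.IsFTotallyAcyclic ∧
      ∃ g : C.P (-1) →ₗ[Sᵐᵒᵖ] G, IsShortExact (LinearMap.ker (C.d (-1))).subtype g := by
  obtain ⟨C, hflat, hexact, hmap, ⟨e⟩⟩ := hG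
  have h := ZComplex.isShortExact_cycles hexact (-1)
  exact ⟨C, ⟨hflat, hexact, hmap⟩, e.symm.toLinearMap.comp (ZComplex.toCycles hexact (-1)),
    h.inj, fun x => (map_eq_zero_iff e.symm e.symm.injective).trans (h.exact x),
    e.symm.surjective.comp h.surj⟩

theorem IsGorensteinFlat.inAuslanderClass {G : Type u} [AddCommGroup G] [Module Sᵐᵒᵖ G]
    (hR : HasFGProjResolution Rᵐᵒᵖ T) (hS : Bijective (leftHomothety S R T))
    (hTT : ExtVanishAll Rᵐᵒᵖ T T) (hT : IsRightTensorFaithful R T)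
    (hdim : (∃ n, LeftFlatDimLE S T n) ∨ ∃ n, InjDimLE S T n) (hG : IsGorensteinFlat S G) :
    InAuslanderClass S R T G := by
  obtain ⟨C, hC, g, hg⟩ := hG.exists_isShortExact
  have hCT (i : ℤ) : InAuslanderClass S R T (C.P i) := (hC.flat i).inAuslanderClass hR hS hTT
  have htor (i : ℤ) : TorVanishAll S (LinearMap.ker (C.d i)) T := torVanishAll_iff.2 <| by
    rcases hdim with ⟨m, hm⟩ | ⟨m, hm⟩
    · exact hC.extVanish_cycles_of_flatResolution hm i
    · exact hC.extVanish_cycles_of_injectiveCoresolution hm i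
  have := hR.finitePresentation
  exact hg.inAuslanderClass_thd hT (ZComplex.inAuslanderClass_cycles hC.exact hCT htor (-1))
    (hCT (-1))

theorem finite_Gfd_mem_auslander_general (hR : HasFGProjResolution Rᵐᵒᵖ T)
    (hS : Bijective (leftHomothety S R T)) (hTT : ExtVanishAll Rᵐᵒᵖ T T)
    (hT : IsRightTensorFaithful R T)
    (hdim : (∃ n, LeftFlatDimLE S T n) ∨ ∃ n, InjDimLE S T n)
    {N : Type u} [AddCommGroup N] [Module Sᵐᵒᵖ N] (hN : ∃ n, GfdLE S N n) :
    InAuslanderClass S R T N := by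
  obtain ⟨n, hn⟩ := hN
  have := hR.finitePresentation
  exact .of_hasClassResolution hT (hn.mono fun _ hG => hG.inAuslanderClass hR hS hTT hT hdim)

end FiniteGfd

/-- Let `T` be a tensorly faithful Wakamatsu tilting `(S,R)`-bimodule and
`N` a right `S`-module of finite Gorenstein flat dimension. If either `pd(_S T) < ∞` or
`id(_S T) < ∞`, then `N ∈ 𝒜_T(S)`. -/
theorem finite_Gfd_mem_auslander
    (S R : Type u) [Ring S] [Ring R]
    (T : Type u) [AddCommGroup T] [Module S T] [Module Rᵐᵒᵖ T] [SMulCommClass S Rᵐᵒᵖ T]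
    (hW : IsWakamatsuTilting S R T) (htf : IsTensorlyFaithful S R T)
    (N : Type u) [AddCommGroup N] [Module Sᵐᵒᵖ N] (hN : ∃ n, GfdLE S N n)
    (hT : (∃ n, ProjDimLE S T n) ∨ (∃ n, InjDimLE S T n)) :
    InAuslanderClass S R T N :=
  finite_Gfd_mem_auslander_general hW.fgProjResR hW.bijS hW.extR htf.1
    (hT.imp_left fun ⟨n, hn⟩ => ⟨n, hn.leftFlatDimLE⟩) hN
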